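/- arXiv:math/0510601 — 4 statements merged into one kernel-verified Lean document; each statement's English description precedes it below -/
import Mathlib

section
/- Let X be a Polish space and d a lower semicontinuous metric on X such that ∫ e^{a_o d(x_o,x)} μ(dx) < ∞ for some a_o > 0 and some point x_o ∈ X, where μ is a Borel probability measure on X. Let α be in the class C. Then α(T_d(μ,ν)) ≤ H(ν|μ) holds for every Borel probability measure ν on X with ∫ d(x_o,x) ν(dx) < ∞ if and only if log ∫ exp[s(φ(x) − ∫ φ dμ)] μ(dx) ≤ α^⊛(s) for all s ≥ 0 and all bounded measurable functions φ that are 1-Lipschitz with respect to d. -/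
open MeasureTheory ENNReal Set
open scoped NNReal ENNReal

noncomputable section

/-- The class 𝒞 of convex, nondecreasing, left continuous functions vanishing at 0,
extended to `ℝ≥0∞` (left continuity at `∞` encodes the convention `α ∞ = lim α`). -/
def ClassCFun (α : ℝ≥0∞ → ℝ≥0∞) : Prop :=
  Monotone α ∧ α 0 = 0 ∧
    (∀ (s t : ℝ≥0∞) (p q : ℝ≥0), p + q = 1 →
      α ((p : ℝ≥0∞) * s + (q : ℝ≥0∞) * t) ≤ (p : ℝ≥0∞) * α s + (q : ℝ≥0∞) * α t) ∧
    ∀ x : ℝ≥0∞, x ≠ 0 → α x = ⨆ y ∈ Set.Iio x, α y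

open scoped Classical in
/-- Relative entropy `H(ν|μ)`. -/
def relEntropy {X : Type*} [MeasurableSpace X] (ν μ : Measure X) : ℝ≥0∞ :=
  if ν ≪ μ ∧ Integrable (fun x => Real.log (ν.rnDeriv μ x).toReal) ν
  then ENNReal.ofReal (∫ x, Real.log (ν.rnDeriv μ x).toReal ∂ν) else ⊤

/-- Optimal transportation cost for the cost function `c`. -/
def optTransportCost {X : Type*} [MeasurableSpace X] (c : X → X → ℝ)
    (μ ν : Measure X) : ℝ≥0∞ :=
  ⨅ (π : Measure (X × X)) (_ : π.map Prod.fst = μ ∧ π.map Prod.snd = ν),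
    ∫⁻ p, ENNReal.ofReal (c p.1 p.2) ∂π

/-- Monotone conjugate `α^⊛(s) = sup_{t ≥ 0} (s t − α t)`. -/
def monoConj (α : ℝ≥0∞ → ℝ≥0∞) (s : ℝ≥0∞) : ℝ≥0∞ :=
  ⨆ t : ℝ≥0, s * (t : ℝ≥0∞) - α (t : ℝ≥0∞)

/-!
By Fenchel–Moreau duality for `α`, the inequality `α (T μ ν) ≤ H(ν|μ)` says that
`s * T μ ν ≤ H(ν|μ) + α^⊛ s` for every `s ≥ 0`, and by Kantorovich–Rubinstein duality `T μ ν` is the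
supremum of `∫ φ dν - ∫ φ dμ` over bounded measurable `1`-Lipschitz `φ`. For fixed `s` and `φ`, the
Gibbs variational principle `log ∫ exp f dμ = sup_ν (∫ f dν - H(ν|μ))` turns the family of
inequalities over `ν` into the bound on the exponential moment of `s * (φ - ∫ φ dμ)`. The supremum
may be restricted to `ν` with a finite first moment, because it is approached by the measure with
density proportional to `exp f` on `{x | d x₀ x ≤ n}` as `n → ∞`.

Kantorovich duality on a Polish space is reduced to a compact one by embedding the space in the
Hilbert cube. There the optimal plan is a positive functional on continuous functions lying below
the superhedging price, which M. Riesz extension provides.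
-/

open Filter Topology

section Conjugate

variable {α : ℝ≥0∞ → ℝ≥0∞}

theorem ClassCFun.monotone (hα : ClassCFun α) : Monotone α := hα.1

theorem ClassCFun.map_zero (hα : ClassCFun α) : α 0 = 0 := hα.2.1

theorem ClassCFun.exists_lt_map_of_lt_map (hα : ClassCFun α) {x h : ℝ≥0∞} (hx : h < α x) :
    ∃ y < x, h < α y := by
  have hx0 : x ≠ 0 := by
    rintro rfl
    simp [hα.map_zero] at hx
  rw [hα.2.2.2 x hx0] at hx
  simpa only [lt_iSup_iff, mem_Iio, exists_prop] using hx

theorem ClassCFun.add_mul_map_le (hα : ClassCFun α) (t : ℝ≥0∞) {a b : ℝ≥0} (hab : a + b ≠ 0) :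
    (a + b : ℝ≥0∞) * α (t + a) ≤ b * α t + a * α (t + a + b) := by
  obtain ⟨-, -, hconv, -⟩ := hα
  have hb : (a + b) * (b / (a + b)) = b := mul_div_cancel₀ b hab
  have ha : (a + b) * (a / (a + b)) = a := mul_div_cancel₀ a hab
  have hsum : b / (a + b) + a / (a + b) = 1 := by rw [← add_div, add_comm b, div_self hab]
  have hmid : ((b / (a + b) : ℝ≥0) : ℝ≥0∞) * t + (a / (a + b) : ℝ≥0) * (t + a + b) = t + a := by
    have ha' : ((a / (a + b) : ℝ≥0) : ℝ≥0∞) * (a + b) = a := by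
      rw [mul_comm]
      exact_mod_cast ha
    rw [add_assoc t, mul_add, ← add_assoc, ← add_mul, ha']
    norm_cast
    rw [hsum, ENNReal.coe_one, one_mul]
  calc (a + b : ℝ≥0∞) * α (t + a)
      ≤ (a + b : ℝ≥0) * ((b / (a + b) : ℝ≥0) * α t + (a / (a + b) : ℝ≥0) * α (t + a + b)) := by
        rw [← hmid, ENNReal.coe_add]
        gcongr
        simpa only [hmid] using hconv t (t + a + b) _ _ hsum
    _ = b * α t + a * α (t + a + b) := by
        rw [mul_add, ← mul_assoc, ← mul_assoc, ← ENNReal.coe_mul, ← ENNReal.coe_mul, hb, ha]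

theorem ClassCFun.tsub_div_le_tsub_div (hα : ClassCFun α) {t a b : ℝ≥0} {h : ℝ≥0∞} (ha : a ≠ 0)
    (hb : b ≠ 0) (hh : h < α (t + a)) : (h - α t) / a ≤ (α (t + a + b) - h) / b := by
  have hconv : b * h + a * h ≤ b * α t + a * α (t + a + b) := by
    calc b * h + a * h = (a + b) * h := by ring
      _ ≤ (a + b) * α (t + a) := by gcongr
      _ ≤ b * α t + a * α (t + a + b) := hα.add_mul_map_le t (by simp [ha])
  have hcross : b * (h - α t) + a * h ≤ a * α (t + a + b) := by
    rcases le_or_gt h (α t) with hle | hlt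
    · rw [tsub_eq_zero_of_le hle, mul_zero, zero_add]
      gcongr
      exact hh.le.trans (hα.monotone le_self_add)
    · rw [ENNReal.mul_sub fun _ _ => coe_ne_top,
        ENNReal.sub_add_eq_add_sub (by gcongr) (mul_ne_top coe_ne_top hlt.ne_top)]
      exact tsub_le_iff_left.2 hconv
  rw [ENNReal.div_le_iff_le_mul (by simp [ha]) (by simp), div_eq_mul_inv, mul_right_comm,
    ← div_eq_mul_inv, ENNReal.le_div_iff_mul_le (by simp [hb]) (by simp), mul_comm,
    mul_comm _ (a : ℝ≥0∞), ENNReal.mul_sub (b := α _) fun _ _ => coe_ne_top]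
  exact ENNReal.le_sub_of_add_le_right (mul_ne_top coe_ne_top hh.ne_top) hcross

theorem ClassCFun.exists_slope (hα : ClassCFun α) {y : ℝ≥0} {h : ℝ≥0∞} (hy : h < α y) :
    ∃ s : ℝ≥0, (∀ t a : ℝ≥0, t + a = y → a ≠ 0 → (h - α t) / a ≤ s) ∧
      ∀ b : ℝ≥0, b ≠ 0 → s ≤ (α (y + b) - h) / b := by
  let s : ℝ≥0∞ := ⨆ p : {p : ℝ≥0 × ℝ≥0 // p.1 + p.2 = y ∧ p.2 ≠ 0}, (h - α p.1.1) / p.1.2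
  have hs : s ≠ ⊤ := by
    obtain ⟨y₀, hy₀, hh⟩ := hα.exists_lt_map_of_lt_map hy
    refine ne_top_of_le_ne_top (ENNReal.div_ne_top hy.ne_top (tsub_pos_of_lt hy₀).ne') ?_
    refine iSup_le fun ⟨⟨t, a⟩, hta, ha⟩ => ?_
    rcases le_total (t : ℝ≥0∞) y₀ with hle | hle
    · gcongr
      · exact tsub_le_self
      · rw [tsub_le_iff_left]
        calc (y : ℝ≥0∞) = t + a := by exact_mod_cast hta.symm
          _ ≤ y₀ + a := by gcongr
    · simp [tsub_eq_zero_of_le (hh.le.trans (hα.monotone hle))]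
  refine ⟨s.toNNReal, fun t a hta ha => ?_, fun b hb => ?_⟩ <;> rw [coe_toNNReal hs]
  · exact le_iSup_of_le ⟨(t, a), hta, ha⟩ le_rfl
  · refine iSup_le fun ⟨⟨t, a⟩, hta, ha⟩ => ?_
    subst hta
    rw [coe_add] at hy ⊢
    exact hα.tsub_div_le_tsub_div ha hb hy

theorem ClassCFun.exists_affine_minorant (hα : ClassCFun α) {y : ℝ≥0} {h : ℝ≥0∞} (hy : h < α y) :
    ∃ s : ℝ≥0, ∀ t : ℝ≥0, h + s * t ≤ α t + s * y := by
  obtain ⟨s, hleft, hright⟩ := hα.exists_slope hy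
  refine ⟨s, fun t => ?_⟩
  rcases lt_trichotomy t y with hty | rfl | hyt
  · obtain ⟨a, ha, rfl⟩ := exists_pos_add_of_lt' hty
    have hslope := hleft t a rfl ha.ne'
    rw [ENNReal.div_le_iff_le_mul (by simp [ha.ne']) (by simp), tsub_le_iff_left] at hslope
    calc h + s * t ≤ α t + s * a + s * t := by gcongr
      _ = α t + s * (t + a : ℝ≥0) := by push_cast; ring
  · gcongr
  · obtain ⟨b, hb, rfl⟩ := exists_pos_add_of_lt' hyt
    have hslope := hright b hb.ne'
    have hh : h ≤ α (y + b) := hy.le.trans (hα.monotone le_self_add)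
    rw [ENNReal.le_div_iff_mul_le (by simp [hb.ne']) (by simp)] at hslope
    calc h + s * (y + b : ℝ≥0) = s * b + h + s * y := by push_cast; ring
      _ ≤ α (y + b) - h + h + s * y := by gcongr
      _ = α (y + b : ℝ≥0) + s * y := by rw [tsub_add_cancel_of_le hh, coe_add]

theorem mul_le_add_monoConj (hα : Monotone α) (s x : ℝ≥0∞) : s * x ≤ α x + monoConj α s := by
  have young (t : ℝ≥0) : s * t ≤ α t + monoConj α s :=
    tsub_le_iff_left.1 (le_iSup (fun t : ℝ≥0 => s * t - α t) t)
  rcases eq_or_ne x ⊤ with rfl | hx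
  · have hs : s * ⊤ = ⨆ n : ℕ, s * n := by rw [← ENNReal.iSup_natCast, ENNReal.mul_iSup]
    rw [hs]
    exact iSup_le fun n => (young n).trans (by gcongr; exact hα le_top)
  · lift x to ℝ≥0 using hx
    exact young x

theorem ClassCFun.map_le_iff_forall_mul_le (hα : ClassCFun α) {x h : ℝ≥0∞} :
    α x ≤ h ↔ ∀ s : ℝ≥0, s * x ≤ h + monoConj α s := by
  refine ⟨fun hx s => (mul_le_add_monoConj hα.monotone s x).trans (by gcongr), fun hs => ?_⟩
  by_contra! hx
  obtain ⟨h', hh', hx'⟩ := exists_between hx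
  obtain ⟨y, hyx, hy⟩ := hα.exists_lt_map_of_lt_map hx'
  lift y to ℝ≥0 using hyx.ne_top
  obtain ⟨s, hminor⟩ := hα.exists_affine_minorant hy
  have hh'_le : h' ≤ s * y := by simpa [hα.map_zero] using hminor 0
  have hconj : monoConj α s ≤ s * y - h' :=
    iSup_le fun t => tsub_le_iff_left.2 <| (ENNReal.add_le_add_iff_left hy.ne_top).1 <| calc
      h' + s * t ≤ α t + s * y := hminor t
      _ = h' + (α t + (s * y - h')) := by rw [add_left_comm, add_tsub_cancel_of_le hh'_le]
  have : s * x < s * y := calc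
    s * x ≤ h + (s * y - h') := (hs s).trans (by gcongr)
    _ < h' + (s * y - h') := ENNReal.add_lt_add_right (by finiteness) hh'
    _ = s * y := add_tsub_cancel_of_le hh'_le
  exact this.not_ge (by gcongr)

end Conjugate

section Entropy

variable {X : Type*} [MeasurableSpace X] {μ ν : Measure X} {f : X → ℝ} {C : ℝ}

theorem integrable_of_abs_le [IsFiniteMeasure μ] (hf : Measurable f) (hC : ∀ x, |f x| ≤ C) :
    Integrable f μ :=
  .of_bound hf.aestronglyMeasurable C (.of_forall hC)

theorem integrable_exp_of_abs_le [IsFiniteMeasure μ] (hf : Measurable f) (hC : ∀ x, |f x| ≤ C) :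
    Integrable (fun x => Real.exp (f x)) μ :=
  integrable_of_abs_le hf.exp fun x => by
    rw [Real.abs_exp, Real.exp_le_exp]
    exact (abs_le.1 (hC x)).2

theorem relEntropy_of_ac_of_integrable (hac : ν ≪ μ) (hint : Integrable (llr ν μ) ν) :
    relEntropy ν μ = ENNReal.ofReal (∫ x, llr ν μ x ∂ν) :=
  if_pos ⟨hac, hint⟩

theorem ac_and_integrable_of_relEntropy_ne_top (h : relEntropy ν μ ≠ ⊤) :
    ν ≪ μ ∧ Integrable (llr ν μ) ν := by
  by_contra hν
  exact h (if_neg hν)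

theorem ofReal_integral_le_relEntropy_add [IsProbabilityMeasure μ] [IsProbabilityMeasure ν]
    (hfν : Integrable f ν) (hfμ : Integrable (fun x => Real.exp (f x)) μ) :
    ENNReal.ofReal (∫ x, f x ∂ν) ≤
      relEntropy ν μ + ENNReal.ofReal (Real.log (∫ x, Real.exp (f x) ∂μ)) := by
  rcases eq_or_ne (relEntropy ν μ) ⊤ with h | h
  · simp [h]
  obtain ⟨hac, hint⟩ := ac_and_integrable_of_relEntropy_ne_top h
  have := isProbabilityMeasure_tilted hfμ
  have hgibbs := InformationTheory.integral_llr_add_sub_measure_univ_nonneg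
    (hac.trans (absolutelyContinuous_tilted hfμ)) (integrable_llr_tilted_right hac hfν hint hfμ)
  rw [integral_llr_tilted_right hac hfν hfμ hint, probReal_univ, probReal_univ] at hgibbs
  rw [relEntropy_of_ac_of_integrable hac hint]
  exact (ENNReal.ofReal_le_ofReal (by linarith)).trans ENNReal.ofReal_add_le

theorem llr_restrict_tilted_ae_eq [IsFiniteMeasure μ] {A : Set X} (hA : MeasurableSet A)
    (hf : AEMeasurable f μ) (hexp : IntegrableOn (fun x => Real.exp (f x)) A μ) :
    llr ((μ.restrict A).tilted f) μ =ᵐ[μ.restrict A]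
      fun x => f x - Real.log (∫ x in A, Real.exp (f x) ∂μ) := by
  have hself : llr (μ.restrict A) μ =ᵐ[μ.restrict A] 0 := by
    filter_upwards [Measure.restrict_le_self.absolutelyContinuous.ae_le
      (Measure.rnDeriv_restrict_self μ hA), ae_restrict_mem hA] with x hx hxA
    simp [llr, hx, hxA]
  filter_upwards [llr_tilted_left Measure.restrict_le_self.absolutelyContinuous hexp hf, hself]
    with x hx hx0
  rw [hx, hx0, Pi.zero_apply, add_zero]

theorem ofReal_log_setIntegral_exp [IsProbabilityMeasure μ] {A : Set X} (hA : MeasurableSet A)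
    (hμA : μ A ≠ 0) (hf : Measurable f) (hC : ∀ x, |f x| ≤ C) :
    ENNReal.ofReal (Real.log (∫ x in A, Real.exp (f x) ∂μ)) =
      ENNReal.ofReal (∫ x, f x ∂(μ.restrict A).tilted f) -
        relEntropy ((μ.restrict A).tilted f) μ := by
  have : NeZero (μ.restrict A) := ⟨by simpa using hμA⟩
  have hexp : IntegrableOn (fun x => Real.exp (f x)) A μ := integrable_exp_of_abs_le hf hC
  set ν := (μ.restrict A).tilted f
  have : IsProbabilityMeasure ν := isProbabilityMeasure_tilted hexp
  have hf_int : Integrable f ν := integrable_of_abs_le hf hC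
  have hνA : ν ≪ μ.restrict A := tilted_absolutelyContinuous _ _
  have hac : ν ≪ μ := hνA.trans Measure.restrict_le_self.absolutelyContinuous
  have hllr : llr ν μ =ᵐ[ν] fun x => f x - Real.log (∫ x in A, Real.exp (f x) ∂μ) :=
    hνA.ae_le (llr_restrict_tilted_ae_eq hA hf.aemeasurable hexp)
  have hint : Integrable (llr ν μ) ν := (hf_int.sub (integrable_const _)).congr hllr.symm
  have hentropy : ∫ x, llr ν μ x ∂ν = ∫ x, f x ∂ν - Real.log (∫ x in A, Real.exp (f x) ∂μ) := by
    rw [integral_congr_ae hllr, integral_sub hf_int (integrable_const _)]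
    simp
  have hnonneg : 0 ≤ ∫ x, llr ν μ x ∂ν := by
    simpa using InformationTheory.integral_llr_add_sub_measure_univ_nonneg hac hint
  rw [relEntropy_of_ac_of_integrable hac hint, ← ENNReal.ofReal_sub _ hnonneg, hentropy,
    _root_.sub_sub_cancel]

theorem ofReal_log_integral_exp_le_of_forall [IsProbabilityMeasure μ] {ℓ : X → ℝ}
    (hℓ : Measurable ℓ) (hf : Measurable f) (hC : ∀ x, |f x| ≤ C) {c : ℝ≥0∞}
    (h : ∀ ν : Measure X, IsProbabilityMeasure ν → ∫⁻ x, ENNReal.ofReal (ℓ x) ∂ν < ⊤ →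
      ENNReal.ofReal (∫ x, f x ∂ν) ≤ relEntropy ν μ + c) :
    ENNReal.ofReal (Real.log (∫ x, Real.exp (f x) ∂μ)) ≤ c := by
  have hA (n : ℕ) : MeasurableSet {x | ℓ x ≤ n} := measurableSet_le hℓ measurable_const
  have hsublevel (n : ℕ) :
      ENNReal.ofReal (Real.log (∫ x in {x | ℓ x ≤ n}, Real.exp (f x) ∂μ)) ≤ c := by
    rcases eq_or_ne (μ {x | ℓ x ≤ n}) 0 with hμ | hμ
    · simp [Measure.restrict_eq_zero.2 hμ]
    have : NeZero (μ.restrict {x | ℓ x ≤ n}) := ⟨by simpa using hμ⟩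
    have := isProbabilityMeasure_tilted (integrable_exp_of_abs_le (μ := μ.restrict {x | ℓ x ≤ n})
      hf hC)
    rw [ofReal_log_setIntegral_exp (hA n) hμ hf hC, tsub_le_iff_left]
    refine h _ this ?_
    calc ∫⁻ x, ENNReal.ofReal (ℓ x) ∂(μ.restrict {x | ℓ x ≤ n}).tilted f
        ≤ ∫⁻ _, ENNReal.ofReal n ∂(μ.restrict {x | ℓ x ≤ n}).tilted f :=
          lintegral_mono_ae <| (tilted_absolutelyContinuous _ _).ae_le <|
            (ae_restrict_mem (hA n)).mono fun x hx => ENNReal.ofReal_le_ofReal hx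
      _ < ⊤ := by simp
  have hunion : ⋃ n : ℕ, {x | ℓ x ≤ n} = univ := iUnion_eq_univ_iff.2 fun x => exists_nat_ge (ℓ x)
  have hexp : Integrable (fun x => Real.exp (f x)) μ := integrable_exp_of_abs_le hf hC
  have hlim : Tendsto (fun n : ℕ => ∫ x in {x | ℓ x ≤ n}, Real.exp (f x) ∂μ) atTop
      (𝓝 (∫ x, Real.exp (f x) ∂μ)) := by
    have := tendsto_setIntegral_of_monotone hA
      (fun m n hmn x (hx : ℓ x ≤ m) => hx.trans (by exact_mod_cast hmn)) hexp.integrableOn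
    rwa [hunion, setIntegral_univ] at this
  exact le_of_tendsto' (ENNReal.tendsto_ofReal (hlim.log (integral_exp_pos hexp).ne')) hsublevel

end Entropy

section Extension

variable {E : Type*} [AddCommGroup E] [Module ℝ E]

theorem exists_linearMap_le_of_mem (s : PointedCone ℝ (E × ℝ)) (hs : ∀ r, (0, r) ∈ s → 0 ≤ r)
    (hdom : ∀ f, ∃ r, (f, r) ∈ s) : ∃ Λ : E →ₗ[ℝ] ℝ, ∀ f r, (f, r) ∈ s → Λ f ≤ r := by
  let onAxis : E × ℝ →ₗ.[ℝ] ℝ :=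
    { domain := Submodule.prod ⊥ ⊤
      toFun := (LinearMap.snd ℝ E ℝ).domRestrict _ }
  have haxis (r : ℝ) : ((0, r) : E × ℝ) ∈ onAxis.domain := by simp [onAxis]
  obtain ⟨g, hg_axis, hg_nonneg⟩ := riesz_extension s onAxis
    (by
      rintro ⟨⟨f, r⟩, hfr⟩ hmem
      obtain rfl : f = 0 := by simpa [onAxis] using hfr
      exact hs r hmem)
    (by
      rintro ⟨f, r⟩
      obtain ⟨r', hr'⟩ := hdom f
      exact ⟨⟨(0, r' - r), haxis _⟩, by simpa using hr'⟩)
  refine ⟨-(g ∘ₗ LinearMap.inl ℝ E ℝ), fun f r hfr => ?_⟩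
  have hg : g (f, r) = g (f, 0) + r := by
    rw [show g (f, r) = g (f, 0) + g (0, r) by simp [← map_add]]
    congr 1
    exact hg_axis ⟨(0, r), haxis r⟩
  have := hg_nonneg (f, r) hfr
  simp only [LinearMap.neg_apply, LinearMap.comp_apply, LinearMap.inl_apply]
  linarith

end Extension

section Riesz

variable {Z : Type*} [TopologicalSpace Z] [CompactSpace Z] [T2Space Z] [MeasurableSpace Z]
  [BorelSpace Z]

theorem exists_isFiniteMeasure_integral_eq (Λ : C(Z, ℝ) →ₗ[ℝ] ℝ) (hΛ : ∀ f, 0 ≤ f → 0 ≤ Λ f) :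
    ∃ π : Measure Z, IsFiniteMeasure π ∧ ∀ f : C(Z, ℝ), ∫ z, f z ∂π = Λ f := by
  let forget : CompactlySupportedContinuousMap Z ℝ →ₗ[ℝ] C(Z, ℝ) :=
    { toFun f := f.toContinuousMap
      map_add' _ _ := rfl
      map_smul' _ _ := rfl }
  let P : CompactlySupportedContinuousMap Z ℝ →ₚ[ℝ] ℝ :=
    PositiveLinearMap.mk₀ (Λ ∘ₗ forget) fun f hf => hΛ (forget f) hf
  exact ⟨RealRMK.rieszMeasure P, inferInstance, fun f =>
    RealRMK.integral_rieszMeasure P (CompactlySupportedContinuousMap.continuousMapEquiv f)⟩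

end Riesz

section CompactDuality

variable {W K L : Type*} [TopologicalSpace K] [CompactSpace K] [MeasurableSpace K] [BorelSpace K]
  [TopologicalSpace L] [CompactSpace L] [MeasurableSpace L] [BorelSpace L]

theorem integrable_continuousMap (μ : Measure K) [IsFiniteMeasure μ] (u : C(K, ℝ)) :
    Integrable u μ :=
  integrable_of_abs_le u.continuous.measurable u.norm_coe_le_norm

/-- The superhedging cone of the Kantorovich problem: `(f, r)` belongs to it if, along `j`, the
function `f` is dominated by some `u ⊕ v + t c` with `t ≥ 0` whose price `∫ u dμ + ∫ v dν + t V`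
is at most `r`. The points `j w` are those at which the cost, `c w`, is prescribed. -/
def superhedgingCone (j : W → K × L) (c : W → ℝ) (μ : Measure K) (ν : Measure L)
    [IsFiniteMeasure μ] [IsFiniteMeasure ν] (V : ℝ) : PointedCone ℝ (C(K × L, ℝ) × ℝ) where
  carrier := {p | ∃ (u : C(K, ℝ)) (v : C(L, ℝ)) (t : ℝ), 0 ≤ t ∧
    (∀ w, p.1 (j w) ≤ u (j w).1 + v (j w).2 + t * c w) ∧
    ∫ x, u x ∂μ + ∫ y, v y ∂ν + t * V ≤ p.2}
  add_mem' := by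
    rintro p q ⟨u, v, t, ht, hp, hpr⟩ ⟨u', v', t', ht', hq, hqr⟩
    refine ⟨u + u', v + v', t + t', add_nonneg ht ht', fun w => ?_, ?_⟩
    · simp only [Prod.fst_add, ContinuousMap.add_apply]
      linarith [hp w, hq w]
    · simp only [ContinuousMap.add_apply, Prod.snd_add]
      rw [integral_add (integrable_continuousMap μ _) (integrable_continuousMap μ _),
        integral_add (integrable_continuousMap ν _) (integrable_continuousMap ν _)]
      linarith
  zero_mem' := ⟨0, 0, 0, le_rfl, by simp, by simp⟩
  smul_mem' := by
    rintro ⟨a, ha⟩ p ⟨u, v, t, ht, hp, hpr⟩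
    refine ⟨a • u, a • v, a * t, mul_nonneg ha ht, fun w => ?_, ?_⟩
    · calc a * p.1 (j w) ≤ a * (u (j w).1 + v (j w).2 + t * c w) := by gcongr; exact hp w
        _ = a * u (j w).1 + a * v (j w).2 + a * t * c w := by ring
    · calc ∫ x, a * u x ∂μ + ∫ y, a * v y ∂ν + a * t * V
          = a * (∫ x, u x ∂μ + ∫ y, v y ∂ν + t * V) := by
            rw [integral_const_mul, integral_const_mul]
            ring
        _ ≤ a * p.2 := by gcongr

variable {j : W → K × L} {c : W → ℝ} {μ : Measure K} {ν : Measure L} [IsFiniteMeasure μ]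
  [IsFiniteMeasure ν] {V : ℝ}

theorem zero_le_of_mem_superhedgingCone (hc : ∀ w, 0 ≤ c w)
    (hV : ∀ (u : C(K, ℝ)) (v : C(L, ℝ)), (∀ w, u (j w).1 + v (j w).2 ≤ c w) →
      ∫ x, u x ∂μ + ∫ y, v y ∂ν ≤ V)
    {r : ℝ} (hr : (0, r) ∈ superhedgingCone j c μ ν V) : 0 ≤ r := by
  obtain ⟨u, v, t, ht, huv, hprice⟩ := hr
  have hpos (τ : ℝ) (hτ : t < τ) : 0 ≤ ∫ x, u x ∂μ + ∫ y, v y ∂ν + τ * V := by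
    have hτ0 : 0 < τ := ht.trans_lt hτ
    have := hV (-τ⁻¹ • u) (-τ⁻¹ • v) fun w => by
      have hw : 0 ≤ u (j w).1 + v (j w).2 + t * c w := huv w
      have : t * c w ≤ τ * c w := by gcongr; exact hc w
      calc -τ⁻¹ * u (j w).1 + -τ⁻¹ * v (j w).2 = τ⁻¹ * -(u (j w).1 + v (j w).2) := by ring
        _ ≤ τ⁻¹ * (τ * c w) := by gcongr; linarith
        _ = c w := inv_mul_cancel_left₀ hτ0.ne' _
    simp only [ContinuousMap.smul_apply, smul_eq_mul, integral_const_mul] at this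
    calc 0 ≤ τ * (V - (-τ⁻¹ * ∫ x, u x ∂μ + -τ⁻¹ * ∫ y, v y ∂ν)) :=
          mul_nonneg hτ0.le (sub_nonneg.2 this)
      _ = ∫ x, u x ∂μ + ∫ y, v y ∂ν + τ * V := by field_simp; ring
  have hlim : Tendsto (fun τ => ∫ x, u x ∂μ + ∫ y, v y ∂ν + τ * V) (𝓝[>] t)
      (𝓝 (∫ x, u x ∂μ + ∫ y, v y ∂ν + t * V)) :=
    ((continuous_id.mul continuous_const).const_add _).continuousWithinAt
  exact (ge_of_tendsto hlim (eventually_mem_nhdsWithin.mono hpos)).trans hprice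

theorem exists_measure_map_fst_eq_map_snd_eq_integral_le [T2Space K] [T2Space L]
    [HasOuterApproxClosed K] [HasOuterApproxClosed L] [SecondCountableTopologyEither K L]
    (hc : ∀ w, 0 ≤ c w)
    (hV : ∀ (u : C(K, ℝ)) (v : C(L, ℝ)), (∀ w, u (j w).1 + v (j w).2 ≤ c w) →
      ∫ x, u x ∂μ + ∫ y, v y ∂ν ≤ V) :
    ∃ π : Measure (K × L), IsFiniteMeasure π ∧ π.map Prod.fst = μ ∧ π.map Prod.snd = ν ∧
      ∀ f : C(K × L, ℝ), (∀ w, f (j w) ≤ c w) → ∫ z, f z ∂π ≤ V := by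
  obtain ⟨Λ, hΛ⟩ := exists_linearMap_le_of_mem (superhedgingCone j c μ ν V)
    (fun _ => zero_le_of_mem_superhedgingCone hc hV)
    fun f => ⟨_, .const K ‖f‖, 0, 0, le_rfl,
      fun w => by simpa using (le_abs_self _).trans (f.norm_coe_le_norm (j w)), le_rfl⟩
  have hΛ_eq {f : C(K × L, ℝ)} {r : ℝ} (hf : (f, r) ∈ superhedgingCone j c μ ν V)
      (hnf : (-f, -r) ∈ superhedgingCone j c μ ν V) : Λ f = r :=
    le_antisymm (hΛ f r hf) (by simpa using hΛ _ _ hnf)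
  obtain ⟨π, hπ, hπΛ⟩ := exists_isFiniteMeasure_integral_eq Λ fun f hf => by
    have : Λ (-f) ≤ 0 :=
      hΛ _ _ ⟨0, 0, 0, le_rfl, fun w => by simpa using hf (j w), by simp⟩
    simpa using this
  refine ⟨π, hπ, ?_, ?_, fun f hf => (hπΛ f).trans_le <| hΛ f V ?_⟩
  · refine ext_of_forall_integral_eq_of_IsFiniteMeasure fun u => ?_
    rw [integral_map measurable_fst.aemeasurable u.continuous.aestronglyMeasurable]
    refine (hπΛ (u.toContinuousMap.comp .fst)).trans (hΛ_eq ?_ ?_)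
    · exact ⟨u.toContinuousMap, 0, 0, le_rfl, by simp, by simp⟩
    · exact ⟨-u.toContinuousMap, 0, 0, le_rfl, by simp, by simp [integral_neg]⟩
  · refine ext_of_forall_integral_eq_of_IsFiniteMeasure fun v => ?_
    rw [integral_map measurable_snd.aemeasurable v.continuous.aestronglyMeasurable]
    refine (hπΛ (v.toContinuousMap.comp .snd)).trans (hΛ_eq ?_ ?_)
    · exact ⟨0, v.toContinuousMap, 0, le_rfl, by simp, by simp⟩
    · exact ⟨0, -v.toContinuousMap, 0, le_rfl, by simp, by simp [integral_neg]⟩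
  · exact ⟨0, 0, 1, zero_le_one, fun w => by simpa using hf w, by simp⟩

end CompactDuality

open scoped BoundedContinuousFunction

section Embedding

variable {X Y K L : Type*} [MeasurableSpace X] [MeasurableSpace Y] [MeasurableSpace K]
  [MeasurableSpace L]

theorem map_injective_of_measurableEmbedding {i : X → K} (hi : MeasurableEmbedding i) :
    Function.Injective fun μ : Measure X => μ.map i :=
  Function.LeftInverse.injective hi.comap_map

theorem exists_map_prodMap_eq {i : X → K} {i' : Y → L} (hi : MeasurableEmbedding i)
    (hi' : MeasurableEmbedding i') {μ : Measure X} {ν : Measure Y} {π : Measure (K × L)}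
    (hμ : π.map Prod.fst = μ.map i) (hν : π.map Prod.snd = ν.map i') :
    ∃ γ : Measure (X × Y), γ.map Prod.fst = μ ∧ γ.map Prod.snd = ν ∧
      γ.map (Prod.map i i') = π := by
  have hj : MeasurableEmbedding (Prod.map i i') := hi.prodMap hi'
  have hfst : ∀ᵐ z ∂π, z.1 ∈ range i :=
    ae_of_ae_map measurable_fst.aemeasurable <| hμ ▸ ae_map_mem_range i hi.measurableSet_range μ
  have hsnd : ∀ᵐ z ∂π, z.2 ∈ range i' :=
    ae_of_ae_map measurable_snd.aemeasurable <| hν ▸ ae_map_mem_range i' hi'.measurableSet_range ν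
  have hrange : ∀ᵐ z ∂π, z ∈ range (Prod.map i i') := by
    filter_upwards [hfst, hsnd] with z h₁ h₂
    exact range_prodMap ▸ ⟨h₁, h₂⟩
  have hπ : (π.comap (Prod.map i i')).map (Prod.map i i') = π := by
    rw [hj.map_comap, Measure.restrict_eq_self_of_ae_mem hrange]
  refine ⟨π.comap (Prod.map i i'), map_injective_of_measurableEmbedding hi ?_,
    map_injective_of_measurableEmbedding hi' ?_, hπ⟩
  · dsimp only
    rw [← hμ, Measure.map_map hi.measurable measurable_fst]
    conv_rhs => rw [← hπ, Measure.map_map measurable_fst hj.measurable]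
    rfl
  · dsimp only
    rw [← hν, Measure.map_map hi'.measurable measurable_snd]
    conv_rhs => rw [← hπ, Measure.map_map measurable_snd hj.measurable]
    rfl

end Embedding

section Approx

variable {W Z : Type*}

theorem lipschitzWith_iInf_add_mul_dist [PseudoMetricSpace Z] [Nonempty W] (j : W → Z) {c : W → ℝ}
    (hc : BddBelow (range c)) (n : ℝ≥0) :
    LipschitzWith n fun z => ⨅ w, c w + n * dist z (j w) := by
  obtain ⟨m, hm⟩ := hc
  refine LipschitzWith.of_le_add_mul n fun z z' => ?_
  rw [← sub_le_iff_le_add]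
  refine le_ciInf fun w => ?_
  have hbdd : BddBelow (range fun w => c w + n * dist z (j w)) :=
    ⟨m, by rintro _ ⟨w, rfl⟩; exact le_add_of_le_of_nonneg (hm ⟨w, rfl⟩) (by positivity)⟩
  have htri : n * dist z (j w) ≤ n * (dist z z' + dist z' (j w)) := by
    gcongr
    exact dist_triangle ..
  linarith [ciInf_le hbdd w]

theorem exists_continuousMap_tendsto_of_lowerSemicontinuous [TopologicalSpace W]
    [TopologicalSpace Z] [TopologicalSpace.PseudoMetrizableSpace Z] {j : W → Z}
    (hj : IsInducing j) {c : W → ℝ} (hc₀ : ∀ w, 0 ≤ c w) (hc : LowerSemicontinuous c) :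
    ∃ f : ℕ → C(Z, ℝ), (∀ n z, 0 ≤ f n z) ∧ (∀ n w, f n (j w) ≤ c w) ∧
      ∀ w, Tendsto (fun n => f n (j w)) atTop (𝓝 (c w)) := by
  let _ : PseudoMetricSpace Z := TopologicalSpace.pseudoMetrizableSpacePseudoMetric Z
  cases isEmpty_or_nonempty W
  · exact ⟨0, fun _ _ => le_rfl, fun _ w => isEmptyElim w, fun w => isEmptyElim w⟩
  have hle (n : ℕ) (w : W) : ⨅ w', c w' + (n : ℝ≥0) * dist (j w) (j w') ≤ c w := by
    refine (ciInf_le ⟨0, ?_⟩ w).trans (by simp)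
    rintro _ ⟨w', rfl⟩
    exact add_nonneg (hc₀ w') (by positivity)
  refine ⟨fun n => ⟨_, (lipschitzWith_iInf_add_mul_dist j ⟨0, forall_mem_range.2 hc₀⟩
    n).continuous⟩, fun n z => le_ciInf fun w => add_nonneg (hc₀ w) (by positivity), hle,
    fun w => tendsto_order.2 ⟨fun a ha => ?_, fun a ha => .of_forall fun n =>
      (hle n w).trans_lt ha⟩⟩
  obtain ⟨b, hab, hb⟩ := exists_between ha
  have hnhds := hc w b hb
  rw [hj.nhds_eq_comap, eventually_comap] at hnhds
  obtain ⟨r, hr, hball⟩ := Metric.eventually_nhds_iff.1 hnhds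
  filter_upwards [tendsto_natCast_atTop_atTop.eventually_ge_atTop (b / r)] with n hn
  rw [div_le_iff₀ hr] at hn
  refine hab.trans_le (le_ciInf fun w' => ?_)
  rcases lt_or_ge (dist (j w') (j w)) r with hw' | hw'
  · exact le_add_of_le_of_nonneg (hball hw' w' rfl).le (by positivity)
  · calc b ≤ n * r := hn
      _ ≤ n * dist (j w) (j w') := by rw [dist_comm]; gcongr
      _ ≤ c w' + (n : ℝ≥0) * dist (j w) (j w') := le_add_of_nonneg_left (hc₀ w')

end Approx

section Kantorovich

variable {X : Type*} [MeasurableSpace X] {c : X → X → ℝ} {μ ν : Measure X}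

theorem lintegral_ofReal_le_of_tendsto {ι : Type*} {l : Filter ι} [l.NeBot]
    [l.IsCountablyGenerated] {f : ι → X → ℝ} {g : X → ℝ} (hf : ∀ i, Integrable (f i) μ)
    (hf₀ : ∀ i x, 0 ≤ f i x) (hlim : ∀ x, Tendsto (f · x) l (𝓝 (g x))) {V : ℝ}
    (hV : ∀ i, ∫ x, f i x ∂μ ≤ V) :
    ∫⁻ x, ENNReal.ofReal (g x) ∂μ ≤ ENNReal.ofReal V := by
  calc ∫⁻ x, ENNReal.ofReal (g x) ∂μ
      = ∫⁻ x, liminf (fun i => ENNReal.ofReal (f i x)) l ∂μ :=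
        lintegral_congr fun x => (ENNReal.tendsto_ofReal (hlim x)).liminf_eq.symm
    _ ≤ liminf (fun i => ∫⁻ x, ENNReal.ofReal (f i x) ∂μ) l :=
        lintegral_liminf_le' fun i => (hf i).aemeasurable.ennreal_ofReal
    _ ≤ ENNReal.ofReal V := by
        refine liminf_le_of_frequently_le' (.of_forall fun i => ?_)
        rw [← ofReal_integral_eq_lintegral_ofReal (hf i) (.of_forall (hf₀ i))]
        exact ENNReal.ofReal_le_ofReal (hV i)

theorem ofReal_integral_le_lintegral_ofReal (f : X → ℝ) :
    ENNReal.ofReal (∫ x, f x ∂μ) ≤ ∫⁻ x, ENNReal.ofReal (f x) ∂μ := by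
  by_cases hf : Integrable f μ
  · rw [integral_eq_lintegral_pos_part_sub_lintegral_neg_part hf]
    exact (ENNReal.ofReal_le_ofReal (sub_le_self _ toReal_nonneg)).trans ofReal_toReal_le
  · simp [integral_undef hf]

theorem ofReal_integral_add_integral_le_optTransportCost {u v : X → ℝ} (hu : Integrable u μ)
    (hv : Integrable v ν) (huv : ∀ x y, u x + v y ≤ c x y) :
    ENNReal.ofReal (∫ x, u x ∂μ + ∫ y, v y ∂ν) ≤ optTransportCost c μ ν := by
  refine le_iInf₂ fun π hπ => ?_
  obtain ⟨rfl, rfl⟩ := hπ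
  have hu_fst : Integrable (fun p : X × X => u p.1) π := hu.comp_measurable measurable_fst
  have hv_snd : Integrable (fun p : X × X => v p.2) π := hv.comp_measurable measurable_snd
  rw [integral_map measurable_fst.aemeasurable hu.aestronglyMeasurable,
    integral_map measurable_snd.aemeasurable hv.aestronglyMeasurable,
    ← integral_add hu_fst hv_snd]
  exact (ofReal_integral_le_lintegral_ofReal _).trans
    (lintegral_mono fun p => ENNReal.ofReal_le_ofReal (huv p.1 p.2))

theorem optTransportCost_le_of_forall_integral_add_le [TopologicalSpace X] [PolishSpace X]
    [BorelSpace X] [IsFiniteMeasure μ] [IsFiniteMeasure ν] (hc₀ : ∀ x y, 0 ≤ c x y)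
    (hc : LowerSemicontinuous fun p : X × X => c p.1 p.2) {V : ℝ}
    (hV : ∀ u v : X →ᵇ ℝ, (∀ x y, u x + v y ≤ c x y) → ∫ x, u x ∂μ + ∫ y, v y ∂ν ≤ V) :
    optTransportCost c μ ν ≤ ENNReal.ofReal V := by
  let _ : MetricSpace X := TopologicalSpace.metrizableSpaceMetric X
  obtain ⟨i, hi⟩ := Metric.PiNatEmbed.exists_embedding_to_hilbert_cube (X := X)
  have him : MeasurableEmbedding i := hi.continuous.measurableEmbedding hi.injective
  have hj : MeasurableEmbedding (Prod.map i i) := him.prodMap him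
  let pull (u : C(ℕ → unitInterval, ℝ)) : X →ᵇ ℝ :=
    (BoundedContinuousFunction.mkOfCompact u).compContinuous ⟨i, hi.continuous⟩
  obtain ⟨π, hπ, hfst, hsnd, hπV⟩ := exists_measure_map_fst_eq_map_snd_eq_integral_le
    (j := Prod.map i i) (c := fun p : X × X => c p.1 p.2) (μ := μ.map i) (ν := ν.map i)
    (fun p => hc₀ p.1 p.2) fun u v huv => by
      rw [him.integral_map, him.integral_map]
      exact hV (pull u) (pull v) fun x y => huv (x, y)
  obtain ⟨γ, hγμ, hγν, rfl⟩ := exists_map_prodMap_eq him him hfst hsnd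
  obtain ⟨f, hf₀, hfc, hf⟩ := exists_continuousMap_tendsto_of_lowerSemicontinuous
    (hi.prodMap hi).isInducing (fun p => hc₀ p.1 p.2) hc
  exact iInf₂_le_of_le γ ⟨hγμ, hγν⟩ <| lintegral_ofReal_le_of_tendsto
    (fun n => hj.integrable_map_iff.1 (integrable_continuousMap _ (f n))) (fun n p => hf₀ n _) hf
    fun n => (hj.integral_map _).symm.trans_le (hπV (f n) (hfc n))

theorem optTransportCost_eq_iSup [TopologicalSpace X] [PolishSpace X] [BorelSpace X]
    [IsFiniteMeasure μ] [IsFiniteMeasure ν] (hc₀ : ∀ x y, 0 ≤ c x y)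
    (hc : LowerSemicontinuous fun p : X × X => c p.1 p.2) :
    optTransportCost c μ ν = ⨆ (u : X →ᵇ ℝ) (v : X →ᵇ ℝ) (_ : ∀ x y, u x + v y ≤ c x y),
      ENNReal.ofReal (∫ x, u x ∂μ + ∫ y, v y ∂ν) := by
  refine le_antisymm ?_ <| iSup_le fun u => iSup₂_le fun v huv =>
    ofReal_integral_add_integral_le_optTransportCost (u.integrable μ) (v.integrable ν) huv
  set S := ⨆ (u : X →ᵇ ℝ) (v : X →ᵇ ℝ) (_ : ∀ x y, u x + v y ≤ c x y),
    ENNReal.ofReal (∫ x, u x ∂μ + ∫ y, v y ∂ν)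
  rcases eq_or_ne S ⊤ with hS | hS
  · simp [hS]
  rw [← ofReal_toReal hS]
  exact optTransportCost_le_of_forall_integral_add_le hc₀ hc fun u v huv =>
    (ofReal_le_iff_le_toReal hS).1 <| le_iSup_of_le u <| le_iSup₂_of_le v huv le_rfl

end Kantorovich

section CostTransform

variable {X Y : Type*}

theorem lowerSemicontinuous_iInf_of_compactSpace {β : Type*} [ConditionallyCompleteLinearOrder β]
    [TopologicalSpace X] [TopologicalSpace Y] [CompactSpace Y] [Nonempty Y] {f : X × Y → β}
    (hf : LowerSemicontinuous f) : LowerSemicontinuous fun x => ⨅ y, f (x, y) := by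
  have hslice (x : X) : LowerSemicontinuousOn (fun y => f (x, y)) univ :=
    (hf.comp (.prodMk_right x)).lowerSemicontinuousOn _
  rw [lowerSemicontinuous_iff_isClosed_preimage]
  intro a
  suffices (fun x => ⨅ y, f (x, y)) ⁻¹' Iic a = Prod.fst '' (f ⁻¹' Iic a) by
    rw [this]
    exact isClosedMap_fst_of_compactSpace _ (hf.isClosed_preimage a)
  ext x
  constructor
  · intro hx
    obtain ⟨y, -, hy⟩ := (hslice x).exists_isMinOn univ_nonempty isCompact_univ
    exact ⟨(x, y), (le_ciInf fun y' => hy (mem_univ y')).trans hx, rfl⟩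
  · rintro ⟨⟨x, y⟩, hy, rfl⟩
    have hbdd := (hslice x).bddBelow_of_isCompact isCompact_univ
    rw [image_univ] at hbdd
    exact (ciInf_le hbdd y).trans hy

/-- The `c`-transform `x ↦ inf_y (c x y - v y)` of `v`. -/
def costTransform (c : X → Y → ℝ) (v : Y → ℝ) (x : X) : ℝ :=
  ⨅ y, c x y - v y

variable {c : X → Y → ℝ} {v : Y → ℝ} {x : X}

theorem costTransform_le (hbdd : BddBelow (range fun y => c x y - v y)) (y : Y) :
    costTransform c v x ≤ c x y - v y :=
  ciInf_le hbdd y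

theorem le_costTransform [Nonempty Y] {a : ℝ} (h : ∀ y, a + v y ≤ c x y) :
    a ≤ costTransform c v x :=
  le_ciInf fun y => le_sub_iff_add_le.2 (h y)

theorem costTransform_sub_le [Nonempty Y] {x' : X} {r : ℝ}
    (hbdd : BddBelow (range fun y => c x y - v y)) (h : ∀ y, c x y ≤ r + c x' y) :
    costTransform c v x - costTransform c v x' ≤ r := by
  rw [sub_le_comm]
  refine le_costTransform fun y => ?_
  linarith [costTransform_le hbdd y, h y]

theorem lowerSemicontinuous_costTransform [TopologicalSpace X] [TopologicalSpace Y]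
    [CompactSpace Y] [Nonempty Y] (hc : LowerSemicontinuous fun p : X × Y => c p.1 p.2)
    (hv : Continuous v) : LowerSemicontinuous (costTransform c v) := by
  have hneg : LowerSemicontinuous fun p : X × Y => -v p.2 :=
    (hv.comp continuous_snd).neg.lowerSemicontinuous
  exact lowerSemicontinuous_iInf_of_compactSpace (f := fun p => c p.1 p.2 - v p.2) <| by
    simpa only [sub_eq_add_neg] using hc.add hneg

end CostTransform

section KantorovichRubinstein

variable {X : Type*}

/-- A pseudometric, as a plain function: the topology of `X` need not be the one it induces. -/
structure IsPseudoMetric (d : X → X → ℝ) : Prop where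
  self_eq_zero : ∀ x, d x x = 0
  symm : ∀ x y, d x y = d y x
  triangle : ∀ x y z, d x z ≤ d x y + d y z

/-- The test functions of Kantorovich–Rubinstein duality: bounded measurable functions that are
`1`-Lipschitz with respect to `d`. -/
structure IsLipschitzTest [MeasurableSpace X] (d : X → X → ℝ) (φ : X → ℝ) : Prop where
  measurable : Measurable φ
  bounded : ∃ C, ∀ x, |φ x| ≤ C
  abs_sub_le : ∀ x y, |φ x - φ y| ≤ d x y

variable {d : X → X → ℝ}

theorem IsPseudoMetric.nonneg (hd : IsPseudoMetric d) (x y : X) : 0 ≤ d x y := by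
  linarith [hd.triangle x y x, hd.self_eq_zero x, hd.symm x y]

theorem IsPseudoMetric.abs_sub_le (hd : IsPseudoMetric d) {φ : X → ℝ}
    (hφ : ∀ x y, φ x - φ y ≤ d x y) (x y : X) : |φ x - φ y| ≤ d x y :=
  abs_sub_le_iff.2 ⟨hφ x y, hd.symm x y ▸ hφ y x⟩

variable [MeasurableSpace X]

theorem IsLipschitzTest.integrable {φ : X → ℝ} (hφ : IsLipschitzTest d φ) (μ : Measure X)
    [IsFiniteMeasure μ] : Integrable φ μ :=
  let ⟨_, hC⟩ := hφ.bounded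
  integrable_of_abs_le hφ.measurable hC

theorem abs_max_neg_min_le {C : ℝ} (hC : 0 ≤ C) (a : ℝ) : |max (-C) (min C a)| ≤ C :=
  abs_le.2 ⟨le_max_left _ _, max_le (by linarith) (min_le_left _ _)⟩

theorem isLipschitzTest_max_neg_min {φ : X → ℝ} (hφ : Measurable φ)
    (hlip : ∀ x y, |φ x - φ y| ≤ d x y) {C : ℝ} (hC : 0 ≤ C) :
    IsLipschitzTest d fun x => max (-C) (min C (φ x)) where
  measurable := measurable_const.max (measurable_const.min hφ)
  bounded := ⟨C, fun x => abs_max_neg_min_le hC _⟩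
  abs_sub_le x y := by
    refine le_trans ?_ (hlip x y)
    simpa using (abs_max_sub_max_le_max (-C) (min C (φ x)) (-C) (min C (φ y))).trans
      (max_le_max le_rfl (abs_min_sub_min_le_max C (φ x) C (φ y)))

theorem IsLipschitzTest.neg {φ : X → ℝ} (hφ : IsLipschitzTest d φ) :
    IsLipschitzTest d fun x => -φ x where
  measurable := hφ.measurable.neg
  bounded := by simpa using hφ.bounded
  abs_sub_le x y := by
    rw [neg_sub_neg, abs_sub_comm]
    exact hφ.abs_sub_le x y

theorem integral_le_integral_add_mul_measureReal_compl {μ : Measure X} [IsFiniteMeasure μ]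
    {f g : X → ℝ} (hf : Integrable f μ) (hg : Integrable g μ) {A : Set X} (hA : MeasurableSet A)
    {D : ℝ} (hle : ∀ x ∈ A, f x ≤ g x) (hD : ∀ x, f x ≤ g x + D) :
    ∫ x, f x ∂μ ≤ ∫ x, g x ∂μ + D * μ.real Aᶜ := by
  have hind : Integrable (Aᶜ.indicator fun _ => D) μ := (integrable_const D).indicator hA.compl
  calc ∫ x, f x ∂μ ≤ ∫ x, (g x + Aᶜ.indicator (fun _ => D) x) ∂μ := by
        refine integral_mono hf (hg.add hind) fun x => ?_
        by_cases hx : x ∈ A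
        · simpa [hx] using hle x hx
        · simpa [hx] using hD x
    _ = ∫ x, g x ∂μ + D * μ.real Aᶜ := by
        rw [integral_add hg hind, integral_indicator_const D hA.compl, smul_eq_mul, mul_comm]

variable [TopologicalSpace X] [BorelSpace X]

-- Infimizing over a compact `K` only, instead of over `X`, makes the `c`-transform of `v` lower
-- semicontinuous, hence measurable; the price is that `φ ≤ -v` holds only on `K`.
theorem exists_isLipschitzTest_of_add_le (hd : IsPseudoMetric d)
    (hd_lsc : LowerSemicontinuous fun p : X × X => d p.1 p.2) {u v : X → ℝ} (hv : Continuous v)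
    {C : ℝ} (huC : ∀ x, |u x| ≤ C) (hvC : ∀ x, |v x| ≤ C) (huv : ∀ x y, u x + v y ≤ d x y)
    {K : Set X} (hK : IsCompact K) (hK₀ : K.Nonempty) :
    ∃ φ, IsLipschitzTest d φ ∧ (∀ x, |φ x| ≤ C) ∧ (∀ x, u x ≤ φ x) ∧ ∀ y ∈ K, φ y ≤ -v y := by
  have := isCompact_iff_compactSpace.1 hK
  have := hK₀.to_subtype
  have hC : 0 ≤ C := (abs_nonneg _).trans (huC hK₀.some)
  set ψ := costTransform (fun x (y : K) => d x y) (fun y : K => v y)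
  have hbdd (x : X) : BddBelow (range fun y : K => d x y - v y) := by
    refine ⟨-C, ?_⟩
    rintro _ ⟨y, rfl⟩
    dsimp only
    linarith [hd.nonneg x y, (abs_le.1 (hvC y)).2]
  have hψ : LowerSemicontinuous ψ := lowerSemicontinuous_costTransform
    (hd_lsc.comp (continuous_id.prodMap continuous_subtype_val)) (by fun_prop)
  have hlip : ∀ x x', |ψ x - ψ x'| ≤ d x x' :=
    hd.abs_sub_le fun x x' => costTransform_sub_le (hbdd x) fun y => hd.triangle x x' y
  refine ⟨_, isLipschitzTest_max_neg_min hψ.measurable hlip hC,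
    fun x => abs_max_neg_min_le hC _, fun x => ?_, fun y hy => ?_⟩
  · exact le_max_of_le_right (le_min (abs_le.1 (huC x)).2 (le_costTransform fun y => huv x y))
  · have hψy : ψ y ≤ -v y := by
      have := costTransform_le (c := fun x (y : K) => d x y) (hbdd y) ⟨y, hy⟩
      rwa [hd.self_eq_zero, zero_sub] at this
    exact max_le (by linarith [(abs_le.1 (hvC y)).2]) ((min_le_right _ _).trans hψy)

variable {μ ν : Measure X}

theorem exists_isLipschitzTest_integral_add_integral_le [T2Space X] [IsFiniteMeasure μ]
    [IsFiniteMeasure ν] (hd : IsPseudoMetric d)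
    (hd_lsc : LowerSemicontinuous fun p : X × X => d p.1 p.2) {u v : X → ℝ} (hu : Measurable u)
    (hv : Continuous v) {C : ℝ} (huC : ∀ x, |u x| ≤ C) (hvC : ∀ x, |v x| ≤ C)
    (huv : ∀ x y, u x + v y ≤ d x y) {K : Set X} (hK : IsCompact K) (hK₀ : K.Nonempty) :
    ∃ φ, IsLipschitzTest d φ ∧
      ∫ x, u x ∂μ + ∫ y, v y ∂ν ≤ ∫ x, φ x ∂ν - ∫ x, φ x ∂μ + 2 * C * ν.real Kᶜ := by
  obtain ⟨φ, hφ, hφC, huφ, hφv⟩ :=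
    exists_isLipschitzTest_of_add_le hd hd_lsc hv huC hvC huv hK hK₀
  have hu_le : ∫ x, u x ∂μ ≤ ∫ x, φ x ∂μ :=
    integral_mono (integrable_of_abs_le hu huC) (hφ.integrable μ) huφ
  have hv_le : ∫ y, v y ∂ν ≤ ∫ y, -φ y ∂ν + 2 * C * ν.real Kᶜ :=
    integral_le_integral_add_mul_measureReal_compl (integrable_of_abs_le hv.measurable hvC)
      (hφ.neg.integrable ν) hK.measurableSet (fun y hy => le_neg_of_le_neg (hφv y hy)) fun y => by
        linarith [(abs_le.1 (hvC y)).2, (abs_le.1 (hφC y)).2]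
  refine ⟨_, hφ.neg, ?_⟩
  rw [integral_neg (μ := μ)]
  linarith

variable [PolishSpace X]

theorem ofReal_integral_add_integral_le_iSup [IsFiniteMeasure μ] [IsFiniteMeasure ν]
    (hd : IsPseudoMetric d) (hd_lsc : LowerSemicontinuous fun p : X × X => d p.1 p.2)
    {u v : X →ᵇ ℝ} (huv : ∀ x y, u x + v y ≤ d x y) :
    ENNReal.ofReal (∫ x, u x ∂μ + ∫ y, v y ∂ν) ≤
      ⨆ (φ : X → ℝ) (_ : IsLipschitzTest d φ), ENNReal.ofReal (∫ x, φ x ∂ν - ∫ x, φ x ∂μ) := by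
  rcases isEmpty_or_nonempty X with _ | ⟨⟨x₀⟩⟩
  · simp [Measure.eq_zero_of_isEmpty]
  set C := max ‖u‖ ‖v‖
  refine ENNReal.le_of_forall_pos_le_add fun ε hε _ => ?_
  obtain ⟨δ, hδ, hδε⟩ := ENNReal.exists_nnreal_pos_mul_lt (ofReal_ne_top (r := 2 * C))
    (coe_ne_zero.2 hε.ne')
  obtain ⟨K, -, hK, hνK⟩ := MeasurableSet.univ.exists_isCompact_sdiff_lt (measure_ne_top ν univ)
    (coe_ne_zero.2 hδ.ne')
  obtain ⟨φ, hφ, hle⟩ := exists_isLipschitzTest_integral_add_integral_le (μ := μ) (ν := ν) hd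
    hd_lsc u.continuous.measurable v.continuous
    (fun x => (u.norm_coe_le_norm x).trans (le_max_left _ _))
    (fun x => (v.norm_coe_le_norm x).trans (le_max_right _ _)) huv (hK.insert x₀)
    (insert_nonempty x₀ K)
  refine (ENNReal.ofReal_le_ofReal hle).trans (ENNReal.ofReal_add_le.trans ?_)
  gcongr
  · exact le_iSup₂_of_le φ hφ le_rfl
  · calc ENNReal.ofReal (2 * C * ν.real (insert x₀ K)ᶜ)
        = ν (insert x₀ K)ᶜ * ENNReal.ofReal (2 * C) := by
          rw [ENNReal.ofReal_mul (by positivity), ofReal_measureReal, mul_comm]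
      _ ≤ δ * ENNReal.ofReal (2 * C) := by
          gcongr
          refine (measure_mono ?_).trans hνK.le
          rw [compl_eq_univ_sdiff]
          exact sdiff_subset_sdiff_right (subset_insert x₀ K)
      _ ≤ ε := hδε.le

theorem optTransportCost_eq_iSup_isLipschitzTest [IsFiniteMeasure μ] [IsFiniteMeasure ν]
    (hd : IsPseudoMetric d) (hd_lsc : LowerSemicontinuous fun p : X × X => d p.1 p.2) :
    optTransportCost d μ ν =
      ⨆ (φ : X → ℝ) (_ : IsLipschitzTest d φ), ENNReal.ofReal (∫ x, φ x ∂ν - ∫ x, φ x ∂μ) := by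
  refine le_antisymm ?_ (iSup₂_le fun φ hφ => ?_)
  · rw [optTransportCost_eq_iSup hd.nonneg hd_lsc]
    exact iSup_le fun u => iSup₂_le fun v huv =>
      ofReal_integral_add_integral_le_iSup hd hd_lsc huv
  · have := ofReal_integral_add_integral_le_optTransportCost (c := d) (hφ.neg.integrable μ)
      (hφ.integrable ν) fun x y => by
        rw [neg_add_eq_sub]
        exact (le_abs_self _).trans (abs_sub_comm (φ x) (φ y) ▸ hφ.abs_sub_le x y)
    rwa [integral_neg, neg_add_eq_sub] at this

end KantorovichRubinstein

section DualCharacterization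

theorem exists_abs_mul_sub_le {X : Type*} {φ : X → ℝ} (hφ : ∃ C, ∀ x, |φ x| ≤ C) (s m : ℝ) :
    ∃ C, ∀ x, |s * (φ x - m)| ≤ C := by
  obtain ⟨C, hC⟩ := hφ
  refine ⟨|s| * (C + |m|), fun x => ?_⟩
  rw [abs_mul]
  gcongr
  exact (abs_sub _ _).trans (add_le_add_left (hC x) _)

theorem integral_mul_sub {X : Type*} [MeasurableSpace X] {ν : Measure X} [IsProbabilityMeasure ν]
    {φ : X → ℝ} (hφ : Integrable φ ν) (s m : ℝ) :
    ∫ x, s * (φ x - m) ∂ν = s * (∫ x, φ x ∂ν - m) := by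
  rw [integral_const_mul, integral_sub hφ (integrable_const m)]
  simp

variable {X : Type*} [TopologicalSpace X] [PolishSpace X] [MeasurableSpace X] [BorelSpace X]
  {d : X → X → ℝ} {α : ℝ≥0∞ → ℝ≥0∞}

theorem map_optTransportCost_le_relEntropy_iff (hd : IsPseudoMetric d)
    (hd_lsc : LowerSemicontinuous fun p : X × X => d p.1 p.2) (hα : ClassCFun α)
    {μ ν : Measure X} [IsFiniteMeasure μ] [IsFiniteMeasure ν] :
    α (optTransportCost d μ ν) ≤ relEntropy ν μ ↔
      ∀ s : ℝ, 0 ≤ s → ∀ φ, IsLipschitzTest d φ →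
        ENNReal.ofReal (s * (∫ x, φ x ∂ν - ∫ x, φ x ∂μ)) ≤
          relEntropy ν μ + monoConj α (ENNReal.ofReal s) := by
  rw [hα.map_le_iff_forall_mul_le, optTransportCost_eq_iSup_isLipschitzTest hd hd_lsc]
  simp only [ENNReal.mul_iSup, iSup_le_iff]
  constructor
  · intro h s hs φ hφ
    rw [ENNReal.ofReal_mul hs]
    exact h s.toNNReal φ hφ
  · intro h s φ hφ
    simpa [ENNReal.ofReal_mul] using h s s.2 φ hφ

theorem T1_dual_characterization_general (hd : IsPseudoMetric d)
    (hd_lsc : LowerSemicontinuous fun p : X × X => d p.1 p.2) (μ : Measure X)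
    [IsProbabilityMeasure μ] (x₀ : X) (hα : ClassCFun α) :
    (∀ ν : Measure X, IsProbabilityMeasure ν →
        (∫⁻ x, ENNReal.ofReal (d x₀ x) ∂ν) < ⊤ →
        α (optTransportCost d μ ν) ≤ relEntropy ν μ) ↔
      ∀ s : ℝ, 0 ≤ s → ∀ φ : X → ℝ, Measurable φ → (∃ C : ℝ, ∀ x, |φ x| ≤ C) →
        (∀ x y, |φ x - φ y| ≤ d x y) →
        ENNReal.ofReal (Real.log (∫ x, Real.exp (s * (φ x - ∫ y, φ y ∂μ)) ∂μ)) ≤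
          monoConj α (ENNReal.ofReal s) := by
  constructor
  · intro hT s hs φ hφ hφ_bdd hlip
    obtain ⟨C, hC⟩ := exists_abs_mul_sub_le hφ_bdd s (∫ y, φ y ∂μ)
    refine ofReal_log_integral_exp_le_of_forall (hd_lsc.comp (.prodMk_right x₀)).measurable
      ((hφ.sub_const _).const_mul s) hC fun ν _ hν => ?_
    have hφ_test : IsLipschitzTest d φ := ⟨hφ, hφ_bdd, hlip⟩
    rw [integral_mul_sub (hφ_test.integrable ν)]
    exact (map_optTransportCost_le_relEntropy_iff hd hd_lsc hα).1 (hT ν ‹_› hν) s hs φ hφ_test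
  · intro hlog ν _ _
    refine (map_optTransportCost_le_relEntropy_iff hd hd_lsc hα).2 fun s hs φ hφ => ?_
    obtain ⟨C, hC⟩ := exists_abs_mul_sub_le hφ.bounded s (∫ y, φ y ∂μ)
    have hmeas : Measurable fun x => s * (φ x - ∫ y, φ y ∂μ) :=
      (hφ.measurable.sub_const _).const_mul s
    rw [← integral_mul_sub (hφ.integrable ν)]
    refine (ofReal_integral_le_relEntropy_add (μ := μ) (ν := ν)
      (integrable_of_abs_le hmeas hC) (integrable_exp_of_abs_le hmeas hC)).trans ?_
    gcongr
    exact hlog s hs φ hφ.measurable hφ.bounded hφ.abs_sub_le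

end DualCharacterization

/-- Dual characterization of convex `T₁`-inequalities (Bobkov–Götze type). -/
theorem T1_dual_characterization
    {X : Type*} [TopologicalSpace X] [PolishSpace X] [MeasurableSpace X] [BorelSpace X]
    (d : X → X → ℝ)
    (hd_symm : ∀ x y, d x y = d y x)
    (hd_tri : ∀ x y z, d x z ≤ d x y + d y z)
    (hd_self : ∀ x, d x x = 0)
    (hd_sep : ∀ x y, d x y = 0 → x = y)
    (hd_nonneg : ∀ x y, 0 ≤ d x y)
    (hd_lsc : LowerSemicontinuous fun p : X × X => d p.1 p.2)
    (μ : Measure X) [IsProbabilityMeasure μ]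
    (a₀ : ℝ) (ha₀ : 0 < a₀) (x₀ : X)
    (hexp : ∫⁻ x, ENNReal.ofReal (Real.exp (a₀ * d x₀ x)) ∂μ < ⊤)
    (α : ℝ≥0∞ → ℝ≥0∞) (hα : ClassCFun α) :
    (∀ ν : Measure X, IsProbabilityMeasure ν →
        (∫⁻ x, ENNReal.ofReal (d x₀ x) ∂ν) < ⊤ →
        α (optTransportCost d μ ν) ≤ relEntropy ν μ) ↔
      ∀ s : ℝ, 0 ≤ s → ∀ φ : X → ℝ, Measurable φ → (∃ C : ℝ, ∀ x, |φ x| ≤ C) →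
        (∀ x y, |φ x - φ y| ≤ d x y) →
        ENNReal.ofReal (Real.log (∫ x, Real.exp (s * (φ x - ∫ y, φ y ∂μ)) ∂μ)) ≤
          monoConj α (ENNReal.ofReal s) :=
  T1_dual_characterization_general ⟨hd_self, hd_symm, hd_tri⟩ hd_lsc μ x₀ hα

end
end

section
/- Let X be a Polish space, μ a Borel probability measure on X, and U a set of measurable real-valued functions on X with U = −U such that ∫ e^{a|φ|} dμ < ∞ for all φ ∈ U and all a > 0. Assume U contains a function that is not μ-almost everywhere constant. If α is in the class C and satisfies the norm-entropy inequality α(‖ν − μ‖*_U) ≤ H(ν|μ) for all probability measures ν with ∫ |φ| dν < ∞ for every φ ∈ U, then there exist constants a > 0 and t_1 > 0 such that α(t) ≤ a t² for all 0 ≤ t ≤ t_1. -/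
open MeasureTheory ENNReal Set
open scoped NNReal ENNReal

noncomputable section

/-!
Let `φ ∈ U` be integrable and not a.e. constant. Some measurable set separates `φ` from its mean, so
there is a measurable centred `g` with `|g| ≤ 1` and `∫ g φ dμ ≠ 0`. The probability measures
`(1 + s g) μ`, `|s| ≤ 1`, move the mean of `φ` by an amount linear in `s`, whereas their entropy is
at most the `χ²`-divergence `s² ∫ g² dμ ≤ s²`. Feeding them into the norm-entropy inequality gives
the quadratic bound.
-/

open InformationTheory

lemma klFun_le_sub_one_sq {x : ℝ} (hx : 0 ≤ x) : klFun x ≤ (x - 1) ^ 2 := by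
  rcases hx.eq_or_lt with rfl | hx
  · simp [klFun_zero]
  have hlog : x * Real.log x ≤ x * (x - 1) :=
    mul_le_mul_of_nonneg_left (Real.log_le_sub_one_of_pos hx) hx.le
  rw [klFun_apply]
  linarith

section Entropy

variable {X : Type*} [MeasurableSpace X] {μ ν : Measure X}

lemma relEntropy_eq_klDiv (h : ν univ = μ univ) : relEntropy ν μ = klDiv ν μ := by
  simp only [relEntropy, klDiv_def, measureReal_def, h, add_sub_cancel_right, llr_def]
  congr

lemma klDiv_le_lintegral_rnDeriv_sub_one_sq [IsFiniteMeasure μ] [IsFiniteMeasure ν] (h : ν ≪ μ) :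
    klDiv ν μ ≤ ∫⁻ x, ENNReal.ofReal (((ν.rnDeriv μ x).toReal - 1) ^ 2) ∂μ := by
  rw [klDiv_eq_lintegral_klFun_of_ac h]
  gcongr
  exact klFun_le_sub_one_sq toReal_nonneg

end Entropy

section PerturbedMeasure

variable {X : Type*} [MeasurableSpace X] {μ : Measure X} {h : X → ℝ}

/-- The measure `(1 + h) μ`, the perturbation of `μ` in the direction `h`. Where `1 + h` is
negative, the density is truncated to `0`. -/
def perturbedMeasure (μ : Measure X) (h : X → ℝ) : Measure X :=
  μ.withDensity fun x => ENNReal.ofReal (1 + h x)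

lemma perturbedMeasure_absolutelyContinuous : perturbedMeasure μ h ≪ μ :=
  withDensity_absolutelyContinuous μ _

lemma isProbabilityMeasure_perturbedMeasure [IsProbabilityMeasure μ] (hh : Integrable h μ)
    (hge : ∀ᵐ x ∂μ, -1 ≤ h x) (hmean : ∫ x, h x ∂μ = 0) :
    IsProbabilityMeasure (perturbedMeasure μ h) := by
  have hint : Integrable (fun x => 1 + h x) μ := (integrable_const 1).add hh
  have hnonneg : 0 ≤ᵐ[μ] fun x => 1 + h x := by
    filter_upwards [hge] with x hx
    exact neg_le_iff_add_nonneg'.mp hx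
  constructor
  rw [perturbedMeasure, withDensity_apply _ .univ, setLIntegral_univ,
    ← ofReal_integral_eq_lintegral_ofReal hint hnonneg, integral_add (integrable_const 1) hh, hmean]
  simp

section VectorValued

variable {E : Type*} [NormedAddCommGroup E] [NormedSpace ℝ E] {φ : X → E}

lemma toReal_ofReal_one_add_smul_ae_eq (hge : ∀ᵐ x ∂μ, -1 ≤ h x) :
    (fun x => (ENNReal.ofReal (1 + h x)).toReal • φ x) =ᵐ[μ] fun x => φ x + h x • φ x := by
  filter_upwards [hge] with x hx
  rw [toReal_ofReal (neg_le_iff_add_nonneg'.mp hx), add_smul, one_smul]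

lemma integrable_perturbedMeasure (hh : AEMeasurable h μ) (hge : ∀ᵐ x ∂μ, -1 ≤ h x)
    (hφ : Integrable φ μ) (hhφ : Integrable (fun x => h x • φ x) μ) :
    Integrable φ (perturbedMeasure μ h) := by
  rw [perturbedMeasure, integrable_withDensity_iff_integrable_smul₀' (by fun_prop) (by simp),
    integrable_congr (toReal_ofReal_one_add_smul_ae_eq hge)]
  exact hφ.add hhφ

lemma integral_perturbedMeasure (hh : AEMeasurable h μ) (hge : ∀ᵐ x ∂μ, -1 ≤ h x)
    (hφ : Integrable φ μ) (hhφ : Integrable (fun x => h x • φ x) μ) :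
    ∫ x, φ x ∂perturbedMeasure μ h = ∫ x, φ x ∂μ + ∫ x, h x • φ x ∂μ := by
  rw [perturbedMeasure, integral_withDensity_eq_integral_toReal_smul₀ (by fun_prop) (by simp),
    integral_congr_ae (toReal_ofReal_one_add_smul_ae_eq hge), integral_add hφ hhφ]

end VectorValued

lemma klDiv_perturbedMeasure_le [IsFiniteMeasure μ] (hh : Integrable h μ)
    (hge : ∀ᵐ x ∂μ, -1 ≤ h x) :
    klDiv (perturbedMeasure μ h) μ ≤ ∫⁻ x, ENNReal.ofReal (h x ^ 2) ∂μ := by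
  have : IsFiniteMeasure (perturbedMeasure μ h) :=
    isFiniteMeasure_withDensity_ofReal ((integrable_const 1).add hh).2
  have hdensity : (perturbedMeasure μ h).rnDeriv μ =ᵐ[μ] fun x => ENNReal.ofReal (1 + h x) :=
    Measure.rnDeriv_withDensity₀ μ (hh.aemeasurable.const_add 1).ennreal_ofReal
  refine (klDiv_le_lintegral_rnDeriv_sub_one_sq perturbedMeasure_absolutelyContinuous).trans_eq
    (lintegral_congr_ae ?_)
  filter_upwards [hdensity, hge] with x hx hgex
  rw [hx, toReal_ofReal (neg_le_iff_add_nonneg'.mp hgex), add_sub_cancel_left]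

lemma klDiv_perturbedMeasure_le_sq [IsProbabilityMeasure μ] (hh : AEStronglyMeasurable h μ)
    {s : ℝ} (hs : s ≤ 1) (hbound : ∀ᵐ x ∂μ, |h x| ≤ s) :
    klDiv (perturbedMeasure μ h) μ ≤ ENNReal.ofReal (s ^ 2) := by
  have hge : ∀ᵐ x ∂μ, -1 ≤ h x := by
    filter_upwards [hbound] with x hx
    exact (abs_le.mp (hx.trans hs)).1
  calc klDiv (perturbedMeasure μ h) μ
      ≤ ∫⁻ x, ENNReal.ofReal (h x ^ 2) ∂μ :=
        klDiv_perturbedMeasure_le (.of_bound hh s hbound) hge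
    _ ≤ ∫⁻ _, ENNReal.ofReal (s ^ 2) ∂μ := by
        refine lintegral_mono_ae ?_
        filter_upwards [hbound] with x hx
        exact ofReal_le_ofReal (sq_le_sq.mpr (hx.trans (le_abs_self s)))
    _ = ENNReal.ofReal (s ^ 2) := by simp

end PerturbedMeasure

section NonconstantFunction

variable {X : Type*} [MeasurableSpace X] {μ : Measure X} {φ : X → ℝ}

lemma exists_setIntegral_ne_measureReal_mul [IsFiniteMeasure μ] (hφ : Integrable φ μ) {c : ℝ}
    (hne : ¬ ∀ᵐ x ∂μ, φ x = c) :
    ∃ A, MeasurableSet A ∧ ∫ x in A, φ x ∂μ ≠ μ.real A * c := by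
  contrapose! hne
  refine hφ.ae_eq_of_forall_setIntegral_eq _ _ (integrable_const c) fun A hA _ => ?_
  rw [hne A hA, setIntegral_const, smul_eq_mul]

variable [IsProbabilityMeasure μ]

lemma exists_centered_integral_mul_ne_zero (hφ : Integrable φ μ)
    (hnc : ¬ ∃ c : ℝ, ∀ᵐ x ∂μ, φ x = c) :
    ∃ g : X → ℝ, Measurable g ∧ (∀ x, |g x| ≤ 1) ∧ ∫ x, g x ∂μ = 0 ∧
      ∫ x, g x * φ x ∂μ ≠ 0 := by
  obtain ⟨A, hA, hne⟩ := exists_setIntegral_ne_measureReal_mul hφ (not_exists.mp hnc (∫ x, φ x ∂μ))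
  refine ⟨fun x => A.indicator 1 x - μ.real A, (measurable_one.indicator hA).sub_const _,
    fun x => ?_, ?_, ?_⟩
  · exact abs_sub_le_of_nonneg_of_le (indicator_nonneg (fun _ _ => zero_le_one) x)
      (indicator_le_self' (fun _ _ => zero_le_one) x) measureReal_nonneg measureReal_le_one
  · have hind : Integrable (A.indicator (1 : X → ℝ)) μ := (integrable_const 1).indicator hA
    rw [integral_sub hind (integrable_const _), integral_indicator_one hA, integral_const]
    simp
  · have hmul : ∀ x, (A.indicator 1 x - μ.real A) * φ x = A.indicator φ x - μ.real A * φ x := by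
      intro x
      by_cases hx : x ∈ A <;> simp [hx, sub_mul]
    simp_rw [hmul]
    rw [integral_sub (hφ.indicator hA) (hφ.const_mul _), integral_indicator hA, integral_const_mul]
    exact sub_ne_zero.mpr hne

lemma exists_integral_sub_eq_relEntropy_le_sq (hφ : Integrable φ μ)
    (hnc : ¬ ∃ c : ℝ, ∀ᵐ x ∂μ, φ x = c) :
    ∃ c > 0, ∀ t : ℝ, |t| ≤ c → ∃ ν : Measure X, IsProbabilityMeasure ν ∧
      (∀ ψ : X → ℝ, Integrable ψ μ → Integrable ψ ν) ∧
      ∫ x, φ x ∂ν - ∫ x, φ x ∂μ = t ∧ relEntropy ν μ ≤ ENNReal.ofReal ((t / c) ^ 2) := by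
  obtain ⟨g, hg, hg_le, hg_mean, hgφ⟩ := exists_centered_integral_mul_ne_zero hφ hnc
  set m := ∫ x, g x * φ x ∂μ
  refine ⟨|m|, abs_pos.mpr hgφ, fun t ht => ?_⟩
  set h : X → ℝ := fun x => t / m * g x
  have hh : Measurable h := hg.const_mul _
  have hs : |t| / |m| ≤ 1 := div_le_one_of_le₀ ht (abs_nonneg m)
  have hh_le : ∀ x, |h x| ≤ |t| / |m| := fun x => by
    rw [abs_mul, abs_div]
    exact mul_le_of_le_one_right (by positivity) (hg_le x)
  have hh_ge : ∀ᵐ x ∂μ, -1 ≤ h x := .of_forall fun x => (abs_le.mp ((hh_le x).trans hs)).1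
  have hh_int : Integrable h μ := .of_bound hh.aestronglyMeasurable _ (.of_forall hh_le)
  have hh_mean : ∫ x, h x ∂μ = 0 := by rw [integral_const_mul, hg_mean, mul_zero]
  have hh_mul : ∀ ψ : X → ℝ, Integrable ψ μ → Integrable (fun x => h x * ψ x) μ :=
    fun ψ hψ => hψ.bdd_mul hh.aestronglyMeasurable (.of_forall hh_le)
  have hprob := isProbabilityMeasure_perturbedMeasure hh_int hh_ge hh_mean
  refine ⟨perturbedMeasure μ h, hprob,
    fun ψ hψ => integrable_perturbedMeasure hh.aemeasurable hh_ge hψ (hh_mul ψ hψ), ?_, ?_⟩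
  · rw [integral_perturbedMeasure hh.aemeasurable hh_ge hφ (hh_mul φ hφ), add_sub_cancel_left]
    simp_rw [h, smul_eq_mul, mul_assoc]
    rw [integral_const_mul, div_mul_cancel₀ t hgφ]
  · rw [relEntropy_eq_klDiv (by simp), div_pow, ← sq_abs t, ← div_pow]
    exact klDiv_perturbedMeasure_le_sq hh.aestronglyMeasurable hs (.of_forall hh_le)

end NonconstantFunction

lemma integrable_of_lintegral_exp_mul_abs_lt_top {X : Type*} [MeasurableSpace X] {μ : Measure X}
    {φ : X → ℝ} (hφ : AEMeasurable φ μ) {a : ℝ} (ha : 0 < a)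
    (hexp : ∫⁻ x, ENNReal.ofReal (Real.exp (a * |φ x|)) ∂μ < ⊤) : Integrable φ μ := by
  have hexp_int : Integrable (fun x => Real.exp (a * |φ x|)) μ :=
    (lintegral_ofReal_ne_top_iff_integrable (by fun_prop)
      (.of_forall fun x => (Real.exp_pos _).le)).mp hexp.ne
  refine (hexp_int.div_const a).mono' hφ.aestronglyMeasurable (.of_forall fun x => ?_)
  rw [Real.norm_eq_abs, le_div_iff₀' ha]
  linarith [Real.add_one_le_exp (a * |φ x|)]

theorem NEI_quadratic_near_zero_general {X : Type*} [MeasurableSpace X]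
    (μ : Measure X) [IsProbabilityMeasure μ] (U : Set (X → ℝ))
    (hUint : ∀ φ ∈ U, Integrable φ μ)
    (hUnc : ∃ φ ∈ U, ¬ ∃ c : ℝ, ∀ᵐ x ∂μ, φ x = c)
    (α : ℝ≥0∞ → ℝ≥0∞) (hα : Monotone α)
    (hNEI : ∀ ν : Measure X, IsProbabilityMeasure ν → (∀ φ ∈ U, Integrable φ ν) →
      α (⨆ φ ∈ U, ENNReal.ofReal ((∫ x, φ x ∂ν) - ∫ x, φ x ∂μ)) ≤ relEntropy ν μ) :
    ∃ a > (0 : ℝ), ∃ t₁ > (0 : ℝ), ∀ t : ℝ, 0 ≤ t → t ≤ t₁ →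
      α (ENNReal.ofReal t) ≤ ENNReal.ofReal (a * t ^ 2) := by
  obtain ⟨φ, hφU, hnc⟩ := hUnc
  obtain ⟨c, hc, hmove⟩ := exists_integral_sub_eq_relEntropy_le_sq (hUint φ hφU) hnc
  refine ⟨(c ^ 2)⁻¹, by positivity, c, hc, fun t ht htc => ?_⟩
  obtain ⟨ν, hν, hν_int, hmean, hent⟩ := hmove t (by rwa [abs_of_nonneg ht])
  calc α (ENNReal.ofReal t)
      = α (ENNReal.ofReal (∫ x, φ x ∂ν - ∫ x, φ x ∂μ)) := by rw [hmean]
    _ ≤ α (⨆ ψ ∈ U, ENNReal.ofReal (∫ x, ψ x ∂ν - ∫ x, ψ x ∂μ)) :=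
        hα (le_iSup₂_of_le φ hφU le_rfl)
    _ ≤ relEntropy ν μ := hNEI ν hν fun ψ hψ => hν_int ψ (hUint ψ hψ)
    _ ≤ ENNReal.ofReal ((t / c) ^ 2) := hent
    _ = ENNReal.ofReal ((c ^ 2)⁻¹ * t ^ 2) := by rw [div_pow, div_eq_inv_mul]

/-- Quadratic upper bound near zero for the function `α` of a convex norm-entropy inequality. -/
theorem NEI_quadratic_near_zero
    {X : Type*} [TopologicalSpace X] [PolishSpace X] [MeasurableSpace X] [BorelSpace X]
    (μ : Measure X) [IsProbabilityMeasure μ]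
    (U : Set (X → ℝ))
    (hUmeas : ∀ φ ∈ U, Measurable φ)
    (hUsymm : ∀ φ ∈ U, -φ ∈ U)
    (hUexp : ∀ φ ∈ U, ∀ a : ℝ, 0 < a →
      ∫⁻ x, ENNReal.ofReal (Real.exp (a * |φ x|)) ∂μ < ⊤)
    (hUnc : ∃ φ ∈ U, ¬ ∃ c : ℝ, ∀ᵐ x ∂μ, φ x = c)
    (α : ℝ≥0∞ → ℝ≥0∞) (hα : ClassCFun α)
    (hNEI : ∀ ν : Measure X, IsProbabilityMeasure ν → (∀ φ ∈ U, Integrable φ ν) →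
      α (⨆ φ ∈ U, ENNReal.ofReal ((∫ x, φ x ∂ν) - ∫ x, φ x ∂μ)) ≤ relEntropy ν μ) :
    ∃ a > (0 : ℝ), ∃ t₁ > (0 : ℝ), ∀ t : ℝ, 0 ≤ t → t ≤ t₁ →
      α (ENNReal.ofReal t) ≤ ENNReal.ofReal (a * t ^ 2) := by
  have hUint : ∀ φ ∈ U, Integrable φ μ := fun φ hφ =>
    integrable_of_lintegral_exp_mul_abs_lt_top (hUmeas φ hφ).aemeasurable one_pos
      (hUexp φ hφ 1 one_pos)
  exact NEI_quadratic_near_zero_general μ U hUint hUnc α hα.1 hNEI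

end
end

section
/- Let μ be a probability measure on a Polish space X and φ a measurable real-valued function such that ∫ e^{a_o|φ|} dμ < ∞ for some a_o > 0. Then the Orlicz norm ‖φ‖_ρ is finite and Λ_φ(s) ≤ ‖φ‖_ρ² s² / (1 − ‖φ‖_ρ s) for all 0 ≤ s < 1/‖φ‖_ρ, where Λ_φ(s) = log ∫ exp[s(φ − ∫ φ dμ)] dμ. -/
/-!
Comparing exponential series termwise gives `exp (t * u) - 1 - t * u ≤ t ^ 2 * (exp |u| - 1)` for
`|t| ≤ 1`. Let `c` exceed the Orlicz norm of `φ`, so that `∫ exp (|φ| / c) ≤ 2`. Integrating the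
inequality at `u = φ / c`, `t = s * c` and using `log z ≤ z - 1` bounds the log-Laplace transform
of `φ - ∫ φ` at `s` by `(s * c) ^ 2`, as soon as `|s| * c ≤ 1`. Letting `c` decrease to the norm
gives a bound without the denominator. The norm is finite because `∫ exp (a * |φ|) → 1` as
`a → 0`, by dominated convergence.
-/

open MeasureTheory ENNReal Set
open scoped NNReal ENNReal

noncomputable section

/-- Orlicz norm for the Young function `ρ(s) = e^{|s|} − 1`. -/
def orliczNormE {X : Type*} [MeasurableSpace X] (μ : Measure X) (φ : X → ℝ) : ℝ≥0∞ :=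
  sInf {b : ℝ≥0∞ | 0 < b ∧ ∫⁻ x, ENNReal.ofReal (Real.exp (|φ x| / b.toReal)) ∂μ ≤ 2}

section

open Filter ProbabilityTheory
open scoped Topology

theorem hasSum_exp_sub_one_sub_id (y : ℝ) :
    HasSum (fun k : ℕ => y ^ (k + 2) / ((k + 2).factorial : ℝ)) (Real.exp y - 1 - y) := by
  have hexp := NormedSpace.expSeries_div_hasSum_exp y
  rw [← Real.exp_eq_exp_ℝ] at hexp
  simpa [Finset.sum_range_succ, sub_sub] using (hasSum_nat_add_iff' 2).2 hexp

theorem exp_mul_sub_one_sub_mul_le {t : ℝ} (ht : |t| ≤ 1) (u : ℝ) :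
    Real.exp (t * u) - 1 - t * u ≤ t ^ 2 * (Real.exp |u| - 1) := by
  have hterm (k : ℕ) : (t * u) ^ (k + 2) / ((k + 2).factorial : ℝ) ≤
      t ^ 2 * (|u| ^ (k + 2) / ((k + 2).factorial : ℝ)) := by
    rw [← mul_div_assoc]
    gcongr
    calc (t * u) ^ (k + 2) ≤ |(t * u) ^ (k + 2)| := le_abs_self _
      _ = |t| ^ k * (t ^ 2 * |u| ^ (k + 2)) := by rw [abs_pow, abs_mul, ← sq_abs t]; ring
      _ ≤ t ^ 2 * |u| ^ (k + 2) :=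
        mul_le_of_le_one_left (by positivity) (pow_le_one₀ (abs_nonneg t) ht)
  calc Real.exp (t * u) - 1 - t * u ≤ t ^ 2 * (Real.exp |u| - 1 - |u|) :=
        hasSum_le hterm (hasSum_exp_sub_one_sub_id _)
          ((hasSum_exp_sub_one_sub_id _).mul_left _)
    _ ≤ t ^ 2 * (Real.exp |u| - 1) :=
        mul_le_mul_of_nonneg_left (sub_le_self _ (abs_nonneg u)) (sq_nonneg t)

theorem sq_mul_le_div_one_sub_mul {b s : ℝ} (hb : 0 ≤ b) (hs : 0 ≤ s) (hsb : s * b < 1) :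
    (s * b) ^ 2 ≤ b ^ 2 * s ^ 2 / (1 - b * s) := by
  rw [← mul_pow]
  rw [mul_comm s b] at hsb ⊢
  exact le_div_self (sq_nonneg _) (sub_pos.2 hsb) (sub_le_self _ (mul_nonneg hb hs))

variable {X : Type*} [MeasurableSpace X] {μ : Measure X} {u φ : X → ℝ} {a₀ c s t : ℝ}

theorem integrable_of_integrable_exp_abs (hu : AEMeasurable u μ)
    (hint : Integrable (fun x => Real.exp |u x|) μ) : Integrable u μ :=
  hint.mono' hu.aestronglyMeasurable <| .of_forall fun x =>
    (le_add_of_nonneg_right zero_le_one).trans (Real.add_one_le_exp |u x|)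

theorem integrable_exp_mul_of_integrable_exp_abs (hu : AEMeasurable u μ)
    (hint : Integrable (fun x => Real.exp |u x|) μ) (ht : |t| ≤ 1) :
    Integrable (fun x => Real.exp (t * u x)) μ := by
  refine hint.mono' (by fun_prop) (.of_forall fun x => ?_)
  rw [Real.norm_of_nonneg (Real.exp_pos _).le]
  gcongr
  calc t * u x ≤ |t| * |u x| := (le_abs_self _).trans_eq (abs_mul t (u x))
    _ ≤ |u x| := mul_le_of_le_one_left (abs_nonneg _) ht

theorem mgf_le_of_integrable_exp_abs [IsProbabilityMeasure μ] (hu : AEMeasurable u μ)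
    (hint : Integrable (fun x => Real.exp |u x|) μ) (ht : |t| ≤ 1) :
    mgf u μ t ≤ 1 + t * ∫ x, u x ∂μ + t ^ 2 * (∫ x, Real.exp |u x| ∂μ - 1) := by
  have hu_int : Integrable u μ := integrable_of_integrable_exp_abs hu hint
  calc mgf u μ t ≤ ∫ x, (1 + t * u x + t ^ 2 * (Real.exp |u x| - 1)) ∂μ := by
        refine integral_mono (integrable_exp_mul_of_integrable_exp_abs hu hint ht)
          (by fun_prop) fun x => ?_
        have := exp_mul_sub_one_sub_mul_le ht (u x)
        dsimp only
        linarith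
    _ = 1 + t * ∫ x, u x ∂μ + t ^ 2 * (∫ x, Real.exp |u x| ∂μ - 1) := by
        rw [integral_add (by fun_prop) (by fun_prop), integral_add (by fun_prop) (by fun_prop),
          integral_const_mul, integral_const_mul, integral_sub hint (by fun_prop)]
        simp

theorem cgf_sub_const [IsProbabilityMeasure μ]
    (hint : Integrable (fun x => Real.exp (t * u x)) μ) (m : ℝ) :
    cgf (fun x => u x - m) μ t = cgf u μ t - t * m := by
  simp only [cgf, sub_eq_add_neg, mgf_add_const]
  rw [Real.log_mul (mgf_pos hint).ne' (Real.exp_pos _).ne', Real.log_exp, mul_neg]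

theorem cgf_sub_integral_le_of_integrable_exp_abs [IsProbabilityMeasure μ]
    (hu : AEMeasurable u μ) (hint : Integrable (fun x => Real.exp |u x|) μ) (ht : |t| ≤ 1) :
    cgf (fun x => u x - ∫ y, u y ∂μ) μ t ≤ t ^ 2 * (∫ x, Real.exp |u x| ∂μ - 1) := by
  have hexp := integrable_exp_mul_of_integrable_exp_abs hu hint ht
  have hlog : cgf u μ t ≤ mgf u μ t - 1 := Real.log_le_sub_one_of_pos (mgf_pos hexp)
  have hmgf := mgf_le_of_integrable_exp_abs hu hint ht
  rw [cgf_sub_const hexp]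
  linarith

theorem tendsto_lintegral_exp_mul_abs_nhds_zero (hφ : AEMeasurable φ μ) (ha₀ : 0 < a₀)
    (hint : ∫⁻ x, ENNReal.ofReal (Real.exp (a₀ * |φ x|)) ∂μ < ⊤) :
    Tendsto (fun a : ℝ => ∫⁻ x, ENNReal.ofReal (Real.exp (a * |φ x|)) ∂μ) (𝓝 0)
      (𝓝 (μ univ)) := by
  rw [← lintegral_one]
  refine tendsto_lintegral_filter_of_dominated_convergence' _ (.of_forall fun a => by fun_prop)
    ?_ hint.ne (.of_forall fun x => ?_)
  · filter_upwards [eventually_le_nhds ha₀] with a ha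
    refine .of_forall fun x => ?_
    gcongr
  · have hcont : Continuous fun a : ℝ => ENNReal.ofReal (Real.exp (a * |φ x|)) :=
      ENNReal.continuous_ofReal.comp (by fun_prop)
    simpa using hcont.tendsto 0

theorem orliczNormE_le_ofReal (hc : 0 < c)
    (h : ∫⁻ x, ENNReal.ofReal (Real.exp (|φ x| / c)) ∂μ ≤ 2) :
    orliczNormE μ φ ≤ ENNReal.ofReal c :=
  sInf_le ⟨ENNReal.ofReal_pos.2 hc, by rwa [ENNReal.toReal_ofReal hc.le]⟩

theorem orliczNormE_lt_top [IsProbabilityMeasure μ] (hφ : AEMeasurable φ μ) (ha₀ : 0 < a₀)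
    (hint : ∫⁻ x, ENNReal.ofReal (Real.exp (a₀ * |φ x|)) ∂μ < ⊤) :
    orliczNormE μ φ < ⊤ := by
  have hlim := tendsto_lintegral_exp_mul_abs_nhds_zero hφ ha₀ hint
  rw [measure_univ] at hlim
  have hlt : ∀ᶠ a in 𝓝[>] (0 : ℝ), ∫⁻ x, ENNReal.ofReal (Real.exp (a * |φ x|)) ∂μ < 2 :=
    (hlim.mono_left nhdsWithin_le_nhds).eventually_lt_const ENNReal.one_lt_two
  obtain ⟨a, ha2, ha0⟩ := (hlt.and self_mem_nhdsWithin).exists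
  refine (orliczNormE_le_ofReal (inv_pos.2 ha0) ?_).trans_lt ENNReal.ofReal_lt_top
  simpa only [div_inv_eq_mul, mul_comm] using ha2.le

theorem lintegral_exp_abs_div_le_two_of_orliczNormE_lt
    (hc : orliczNormE μ φ < ENNReal.ofReal c) :
    ∫⁻ x, ENNReal.ofReal (Real.exp (|φ x| / c)) ∂μ ≤ 2 := by
  obtain ⟨b, ⟨hb0, hb2⟩, hbc⟩ := sInf_lt_iff.1 hc
  have hb : 0 < b.toReal := ENNReal.toReal_pos hb0.ne' hbc.ne_top
  have hbc' : b.toReal ≤ c := (ENNReal.toReal_lt_of_lt_ofReal hbc).le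
  refine le_trans (lintegral_mono fun x => ?_) hb2
  gcongr

theorem integrable_exp_abs_div_of_orliczNormE_lt (hφ : AEMeasurable φ μ)
    (hc : orliczNormE μ φ < ENNReal.ofReal c) :
    Integrable (fun x => Real.exp (|φ x| / c)) μ :=
  (lintegral_ofReal_ne_top_iff_integrable (by fun_prop)
    (.of_forall fun _ => (Real.exp_pos _).le)).1
    ((lintegral_exp_abs_div_le_two_of_orliczNormE_lt hc).trans_lt ENNReal.ofNat_lt_top).ne

theorem integral_exp_abs_div_le_two_of_orliczNormE_lt (hφ : AEMeasurable φ μ)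
    (hc : orliczNormE μ φ < ENNReal.ofReal c) :
    ∫ x, Real.exp (|φ x| / c) ∂μ ≤ 2 := by
  have h := lintegral_exp_abs_div_le_two_of_orliczNormE_lt hc
  rw [← ofReal_integral_eq_lintegral_ofReal (integrable_exp_abs_div_of_orliczNormE_lt hφ hc)
    (.of_forall fun _ => (Real.exp_pos _).le)] at h
  simpa using h

theorem cgf_sub_integral_le_sq_of_orliczNormE_lt [IsProbabilityMeasure μ]
    (hφ : AEMeasurable φ μ) (hc : orliczNormE μ φ < ENNReal.ofReal c) (hs : |s| * c ≤ 1) :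
    cgf (fun x => φ x - ∫ y, φ y ∂μ) μ s ≤ (s * c) ^ 2 := by
  have hc0 : 0 < c := ENNReal.ofReal_pos.1 (pos_of_gt hc)
  have habs (x : X) : |φ x / c| = |φ x| / c := by rw [abs_div, abs_of_pos hc0]
  have hscale : cgf (fun x => φ x / c - ∫ y, φ y / c ∂μ) μ (s * c) =
      cgf (fun x => φ x - ∫ y, φ y ∂μ) μ s := by
    simp only [cgf, mgf, integral_div, ← sub_div, mul_assoc, mul_div_cancel₀ _ hc0.ne']
  have hint : Integrable (fun x => Real.exp |φ x / c|) μ := by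
    simpa only [habs] using integrable_exp_abs_div_of_orliczNormE_lt hφ hc
  have htwo : ∫ x, Real.exp |φ x / c| ∂μ ≤ 2 := by
    simpa only [habs] using integral_exp_abs_div_le_two_of_orliczNormE_lt hφ hc
  have hsc : |s * c| ≤ 1 := by rwa [abs_mul, abs_of_pos hc0]
  calc cgf (fun x => φ x - ∫ y, φ y ∂μ) μ s
      ≤ (s * c) ^ 2 * (∫ x, Real.exp |φ x / c| ∂μ - 1) :=
        hscale ▸ cgf_sub_integral_le_of_integrable_exp_abs (hφ.div_const c) hint hsc
    _ ≤ (s * c) ^ 2 := mul_le_of_le_one_right (sq_nonneg _) (by linarith)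

theorem cgf_sub_integral_le_sq_of_abs_mul_orliczNormE_lt_one [IsProbabilityMeasure μ]
    (hφ : AEMeasurable φ μ) (hfin : orliczNormE μ φ < ⊤)
    (hs : |s| * (orliczNormE μ φ).toReal < 1) :
    cgf (fun x => φ x - ∫ y, φ y ∂μ) μ s ≤ (s * (orliczNormE μ φ).toReal) ^ 2 := by
  set b := (orliczNormE μ φ).toReal
  have hbound : ∀ᶠ c in 𝓝[>] b, cgf (fun x => φ x - ∫ y, φ y ∂μ) μ s ≤ (s * c) ^ 2 := by
    have hlt : ∀ᶠ c in 𝓝[>] b, |s| * c < 1 :=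
      ((continuous_const_mul |s|).tendsto b).mono_left nhdsWithin_le_nhds
        |>.eventually_lt_const hs
    filter_upwards [hlt, self_mem_nhdsWithin] with c hsc hbc
    exact cgf_sub_integral_le_sq_of_orliczNormE_lt hφ
      ((ENNReal.lt_ofReal_iff_toReal_lt hfin.ne).2 hbc) hsc.le
  have hcont : Continuous fun c : ℝ => (s * c) ^ 2 := by fun_prop
  exact ge_of_tendsto ((hcont.tendsto b).mono_left nhdsWithin_le_nhds) hbound

theorem bernstein_orlicz_general [IsProbabilityMeasure μ] (hφ : AEMeasurable φ μ)
    (ha₀ : 0 < a₀) (hint : ∫⁻ x, ENNReal.ofReal (Real.exp (a₀ * |φ x|)) ∂μ < ⊤) :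
    orliczNormE μ φ < ⊤ ∧
      ∀ s : ℝ, |s| * (orliczNormE μ φ).toReal < 1 →
        Real.log (∫ x, Real.exp (s * (φ x - ∫ y, φ y ∂μ)) ∂μ) ≤
          (s * (orliczNormE μ φ).toReal) ^ 2 :=
  have hfin := orliczNormE_lt_top hφ ha₀ hint
  ⟨hfin, fun _ hs => cgf_sub_integral_le_sq_of_abs_mul_orliczNormE_lt_one hφ hfin hs⟩

end

/-- A Bernstein type inequality for the log-Laplace transform, in terms of the Orlicz norm. -/
theorem bernstein_orlicz
    {X : Type*} [TopologicalSpace X] [PolishSpace X] [MeasurableSpace X] [BorelSpace X]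
    (μ : Measure X) [IsProbabilityMeasure μ]
    (φ : X → ℝ) (hφ : Measurable φ)
    (a₀ : ℝ) (ha₀ : 0 < a₀)
    (hint : ∫⁻ x, ENNReal.ofReal (Real.exp (a₀ * |φ x|)) ∂μ < ⊤) :
    orliczNormE μ φ < ⊤ ∧
      ∀ s : ℝ, 0 ≤ s → s < 1 / (orliczNormE μ φ).toReal →
        Real.log (∫ x, Real.exp (s * (φ x - ∫ y, φ y ∂μ)) ∂μ) ≤
          (orliczNormE μ φ).toReal ^ 2 * s ^ 2 / (1 - (orliczNormE μ φ).toReal * s) := by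
  obtain ⟨hfin, hbound⟩ := bernstein_orlicz_general hφ.aemeasurable ha₀ hint
  refine ⟨hfin, fun s hs hsb => ?_⟩
  have hlt : s * (orliczNormE μ φ).toReal < 1 :=
    (lt_div_iff₀ (one_div_pos.1 (hs.trans_lt hsb))).1 hsb
  exact (hbound s (by rwa [abs_of_nonneg hs])).trans
    (sq_mul_le_div_one_sub_mul ENNReal.toReal_nonneg hs hlt)

end
end

section
/- Let X_1, X_2 be Polish spaces with Borel probability measures μ_1, μ_2, and let c_1 : X_1 × X_1 → [0,∞) and c_2 : X_2 × X_2 → [0,∞) be continuous cost functions with c_1(x,x) = 0 and c_2(x,x) = 0 for all x. Suppose α_1, α_2 are in the class C and the transportation cost inequalities α_1(T_{c_1}(μ_1,ν_1)) ≤ H(ν_1|μ_1) for all Borel probability measures ν_1 on X_1 and α_2(T_{c_2}(μ_2,ν_2)) ≤ H(ν_2|μ_2) for all Borel probability measures ν_2 on X_2 hold. Then for every Borel probability measure ν on X_1 × X_2, (α_1 □ α_2)(T_{c_1⊕c_2}(μ_1 ⊗ μ_2, ν)) ≤ H(ν|μ_1 ⊗ μ_2), where c_1 ⊕ c_2((x_1,x_2),(y_1,y_2))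 = c_1(x_1,y_1) + c_2(x_2,y_2). -/
open MeasureTheory ENNReal Set
open scoped NNReal ENNReal

noncomputable section

/-- Inf-convolution of two functions on `[0,∞)`. -/
def infConvol (α₁ α₂ : ℝ≥0∞ → ℝ≥0∞) (t : ℝ≥0∞) : ℝ≥0∞ :=
  ⨅ (t₁ : ℝ≥0∞) (t₂ : ℝ≥0∞) (_ : t₁ + t₂ = t), α₁ t₁ + α₂ t₂

open ProbabilityTheory InformationTheory Filter Topology

/-!
The chain rule `H(ν | μ₁ ⊗ μ₂) = H(ν₁ | μ₁) + H(ν | ν₁ ⊗ μ₂)`, where `ν₁` is the first marginal of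
`ν`, reduces the theorem to the existence of a `t` with `α₂ t ≤ H(ν | ν₁ ⊗ μ₂)` and
`T_{c₁ ⊕ c₂}(μ₁ ⊗ μ₂, ν) ≤ T_{c₁}(μ₁, ν₁) + t`.

Suppose first that the conditional law `ν(· | x)` of the second coordinate depends on `x` only
through a countable partition of `X₁`. Near-optimal plans from `μ₂` to the countably many
conditional laws can then be chosen without any measurable selection theorem; gluing them to a
near-optimal plan from `μ₁` to `ν₁` bounds the cost by
`T_{c₁}(μ₁, ν₁) + ∫ T_{c₂}(μ₂, ν(· | x)) dν₁`. By Jensen's inequality and the hypothesis on `μ₂`,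
the value of `α₂` at the last integral is at most `∫ H(ν(· | x) | μ₂) dν₁ = H(ν | ν₁ ⊗ μ₂)`.

For a general `ν`, average the conditional laws over the cells of a partition. This decreases the
entropy `H(ν | ν₁ ⊗ μ₂)`, and the averaged measures converge weakly to `ν` as the cells shrink. The
estimate survives in the limit because `T` is lower semicontinuous: taking marginals is a proper map
by Prokhorov's theorem, so it sends closed sets of plans to closed sets.
-/

lemma relEntropy_eq_klDiv_s8 {X : Type*} [MeasurableSpace X] (ν μ : Measure X)
    [IsProbabilityMeasure ν] [IsProbabilityMeasure μ] : relEntropy ν μ = klDiv ν μ := by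
  classical
  rw [relEntropy, klDiv_def]
  simp only [llr_def, probReal_univ, add_sub_cancel_right]

lemma infConvol_le_of_le_add {α₁ α₂ : ℝ≥0∞ → ℝ≥0∞} (hα₁ : Monotone α₁) (hα₂ : Monotone α₂)
    {t t₁ t₂ : ℝ≥0∞} (h : t ≤ t₁ + t₂) : infConvol α₁ α₂ t ≤ α₁ t₁ + α₂ t₂ := by
  have hsplit : min t t₁ + (t - t₁) = t := by rw [add_comm, tsub_add_min]
  calc infConvol α₁ α₂ t ≤ α₁ (min t t₁) + α₂ (t - t₁) :=
        iInf_le_of_le _ (iInf₂_le (t - t₁) hsplit)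
    _ ≤ α₁ t₁ + α₂ t₂ := add_le_add (hα₁ (min_le_right _ _)) (hα₂ (tsub_le_iff_left.mpr h))

namespace ClassCFun

variable {α : ℝ≥0∞ → ℝ≥0∞}

lemma le_of_forall_lt (hα : ClassCFun α) {x b : ℝ≥0∞} (h : ∀ y < x, α y ≤ b) : α x ≤ b := by
  obtain ⟨-, map_zero, -, leftCont⟩ := hα
  rcases eq_or_ne x 0 with rfl | hx
  · simp [map_zero]
  · rw [leftCont x hx]
    exact iSup₂_le h

lemma map_sSup_le (hα : ClassCFun α) (b : ℝ≥0∞) : α (sSup {t | α t ≤ b}) ≤ b := by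
  refine hα.le_of_forall_lt fun y hy => ?_
  obtain ⟨t, ht, hyt⟩ := lt_sSup_iff.mp hy
  exact (hα.1 hyt.le).trans ht

lemma map_sum_le (hα : ClassCFun α) {ι : Type*} (s : Finset ι) (w : ι → ℝ≥0) (t : ι → ℝ≥0∞)
    (hw : ∑ i ∈ s, w i ≤ 1) : α (∑ i ∈ s, w i * t i) ≤ ∑ i ∈ s, w i * α (t i) := by
  classical
  obtain ⟨-, map_zero, convex, -⟩ := hα
  induction s using Finset.induction_on generalizing w with
  | empty => simp [map_zero]
  | insert a s ha ih =>
    rw [Finset.sum_insert ha] at hw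
    obtain ⟨q, hq⟩ := exists_add_of_le (le_self_add.trans hw)
    have hsum : ∑ i ∈ s, w i ≤ q := by
      rw [hq] at hw
      exact le_of_add_le_add_left hw
    have rescale (v : ι → ℝ≥0∞) :
        ∑ i ∈ s, w i * v i = q * ∑ i ∈ s, ((w i / q : ℝ≥0) : ℝ≥0∞) * v i := by
      rw [Finset.mul_sum]
      refine Finset.sum_congr rfl fun i hi => ?_
      have hi_le : w i ≤ q := (Finset.single_le_sum (fun _ _ => zero_le) hi).trans hsum
      rw [← mul_assoc, ← ENNReal.coe_mul, mul_div_cancel_of_imp' fun h => by simpa [h] using hi_le]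
    rw [Finset.sum_insert ha, Finset.sum_insert ha, rescale t, rescale fun i => α (t i)]
    refine (convex _ _ _ _ hq.symm).trans ?_
    gcongr
    refine ih _ ?_
    rw [← Finset.sum_div]
    exact div_le_one_of_le₀ hsum zero_le

lemma map_lintegral_le (hα : ClassCFun α) {Ω : Type*} [MeasurableSpace Ω] (ρ : Measure Ω)
    [IsProbabilityMeasure ρ] (f : Ω → ℝ≥0∞) : α (∫⁻ x, f x ∂ρ) ≤ ∫⁻ x, α (f x) ∂ρ := by
  refine hα.le_of_forall_lt fun y hy => ?_
  rw [lintegral_def] at hy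
  simp only [lt_iSup_iff] at hy
  obtain ⟨g, hgf, hyg⟩ := hy
  let w (v : ℝ≥0∞) : ℝ≥0 := (ρ (g ⁻¹' {v})).toNNReal
  have coe_w (v : ℝ≥0∞) : (w v : ℝ≥0∞) = ρ (g ⁻¹' {v}) := coe_toNNReal (measure_ne_top _ _)
  have sum_w : ∑ v ∈ g.range, w v ≤ 1 := by
    rw [← ENNReal.coe_le_coe]
    push_cast
    simp only [coe_w, g.sum_range_measure_preimage_singleton, measure_univ, le_refl]
  calc α y ≤ α (g.lintegral ρ) := hα.1 hyg.le
    _ = α (∑ v ∈ g.range, w v * v) := by simp only [SimpleFunc.lintegral, coe_w, mul_comm]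
    _ ≤ ∑ v ∈ g.range, w v * α v := hα.map_sum_le _ _ _ sum_w
    _ = (g.map α).lintegral ρ := by simp only [SimpleFunc.map_lintegral, coe_w, mul_comm]
    _ ≤ ∫⁻ x, α (f x) ∂ρ := by
      rw [← SimpleFunc.lintegral_eq_lintegral]
      exact lintegral_mono fun x => hα.1 (hgf x)

end ClassCFun

lemma lintegral_klDiv_le {Ω Y : Type*} [MeasurableSpace Ω] [MeasurableSpace Y]
    [MeasurableSpace.CountableOrCountablyGenerated Ω Y] (ρ : Measure Ω) [IsFiniteMeasure ρ]
    (κ η : Kernel Ω Y) [IsFiniteKernel κ] [IsFiniteKernel η] :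
    ∫⁻ i, klDiv (κ i) (η i) ∂ρ ≤ klDiv (ρ ⊗ₘ κ) (ρ ⊗ₘ η) := by
  by_cases hac : ρ ⊗ₘ κ ≪ ρ ⊗ₘ η
  swap; · simp [klDiv_of_not_ac hac]
  have hac_ae : ∀ᵐ i ∂ρ, κ i ≪ η i := hac.kernel_of_compProd
  have density : ρ ⊗ₘ κ = (ρ ⊗ₘ η).withDensity fun p => κ.rnDeriv η p.1 p.2 := by
    rw [← Measure.compProd_withDensity (by fun_prop)]
    refine Measure.compProd_congr ?_
    filter_upwards [hac_ae] with i hi using (Kernel.withDensity_rnDeriv_eq hi).symm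
  have rnDeriv_eq : (ρ ⊗ₘ κ).rnDeriv (ρ ⊗ₘ η) =ᵐ[ρ ⊗ₘ η] fun p => κ.rnDeriv η p.1 p.2 := by
    rw [density]
    exact Measure.rnDeriv_withDensity _ (by fun_prop)
  rw [klDiv_eq_lintegral_klFun_of_ac hac, Measure.lintegral_compProd (by fun_prop)]
  refine lintegral_mono_ae ?_
  filter_upwards [hac_ae, Measure.ae_ae_of_ae_compProd rnDeriv_eq] with i hi h_rnDeriv
  rw [klDiv_eq_lintegral_klFun_of_ac hi]
  refine (lintegral_congr_ae ?_).le
  filter_upwards [h_rnDeriv, Kernel.rnDeriv_eq_rnDeriv_measure (κ := κ) (η := η) (a := i)]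
    with y hy hy_measure
  rw [hy, hy_measure]

lemma klDiv_prod_eq_add {X₁ X₂ : Type*} [MeasurableSpace X₁] [MeasurableSpace X₂]
    [StandardBorelSpace X₂] [Nonempty X₂] (ν : Measure (X₁ × X₂)) [IsFiniteMeasure ν]
    (μ₁ : Measure X₁) [IsFiniteMeasure μ₁] (μ₂ : Measure X₂) [IsProbabilityMeasure μ₂] :
    klDiv ν (μ₁.prod μ₂) = klDiv ν.fst μ₁ + klDiv ν (ν.fst.prod μ₂) := by
  have h := klDiv_compProd_eq_add ν.fst μ₁ ν.condKernel (Kernel.const X₁ μ₂)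
  rwa [ν.disintegrate ν.condKernel, Measure.compProd_const, Measure.compProd_const] at h

lemma map_prodMap_compProd {Z W X Y : Type*} [MeasurableSpace Z] [MeasurableSpace W]
    [MeasurableSpace X] [MeasurableSpace Y] (π : Measure Z) [SFinite π] {P : Kernel Z W}
    [IsSFiniteKernel P] {κ : Kernel X Y} [IsSFiniteKernel κ] {f : Z → X} {g : W → Y}
    (hf : Measurable f) (hg : Measurable g) (h : ∀ z, (P z).map g = κ (f z)) :
    (π ⊗ₘ P).map (Prod.map f g) = π.map f ⊗ₘ κ := by
  refine Measure.ext_of_lintegral _ fun φ hφ => ?_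
  rw [lintegral_map hφ (by fun_prop), Measure.lintegral_compProd (by fun_prop),
    Measure.lintegral_compProd hφ, lintegral_map hφ.lintegral_kernel_prod_right' hf]
  refine lintegral_congr fun z => ?_
  rw [← h z, lintegral_map (by fun_prop) hg]
  rfl

/-- `IsCoupling π μ ν` says that `π` is a transport plan between `μ` and `ν`: a measure on the
product whose marginals are `μ` and `ν`. -/
structure IsCoupling {X Y : Type*} [MeasurableSpace X] [MeasurableSpace Y] (π : Measure (X × Y))
    (μ : Measure X) (ν : Measure Y) : Prop where
  fst_eq : π.fst = μ
  snd_eq : π.snd = ν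

lemma IsCoupling.isProbabilityMeasure {X Y : Type*} [MeasurableSpace X] [MeasurableSpace Y]
    {π : Measure (X × Y)} {μ : Measure X} {ν : Measure Y} [IsProbabilityMeasure μ]
    (h : IsCoupling π μ ν) : IsProbabilityMeasure π :=
  ⟨by rw [← Measure.fst_univ, h.fst_eq, measure_univ]⟩

lemma optTransportCost_le_lintegral {X : Type*} [MeasurableSpace X] (c : X → X → ℝ)
    {μ ν : Measure X} {π : Measure (X × X)} (hπ : IsCoupling π μ ν) :
    optTransportCost c μ ν ≤ ∫⁻ p, ENNReal.ofReal (c p.1 p.2) ∂π :=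
  iInf₂_le π ⟨hπ.fst_eq, hπ.snd_eq⟩

lemma exists_isCoupling_lintegral_lt {X : Type*} [MeasurableSpace X] {c : X → X → ℝ}
    {μ ν : Measure X} {r : ℝ≥0∞} (h : optTransportCost c μ ν < r) :
    ∃ π, IsCoupling π μ ν ∧ ∫⁻ p, ENNReal.ofReal (c p.1 p.2) ∂π < r := by
  simp only [optTransportCost, iInf_lt_iff] at h
  obtain ⟨π, ⟨hfst, hsnd⟩, hlt⟩ := h
  exact ⟨π, ⟨hfst, hsnd⟩, hlt⟩

lemma exists_isCoupling_lintegral_le {X : Type*} [MeasurableSpace X] (c : X → X → ℝ)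
    (μ ν : Measure X) [IsProbabilityMeasure μ] [IsProbabilityMeasure ν] {ε : ℝ≥0∞} (hε : ε ≠ 0) :
    ∃ π, IsCoupling π μ ν ∧
      ∫⁻ p, ENNReal.ofReal (c p.1 p.2) ∂π ≤ optTransportCost c μ ν + ε := by
  by_cases htop : optTransportCost c μ ν = ⊤
  · exact ⟨μ.prod ν, ⟨Measure.fst_prod, Measure.snd_prod⟩, by simp [htop]⟩
  · obtain ⟨π, hπ, hlt⟩ := exists_isCoupling_lintegral_lt (ENNReal.lt_add_right htop hε)
    exact ⟨π, hπ, hlt.le⟩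

section Glue

variable {X₁ X₂ Y₁ Y₂ : Type*} [MeasurableSpace X₁] [MeasurableSpace X₂] [MeasurableSpace Y₁]
  [MeasurableSpace Y₂]

/-- The plan that moves `x₁` to `y₁` according to `π` and then, given `z = (x₁, y₁)`, moves `x₂` to
`y₂` according to `P z`, as a measure on pairs `((x₁, x₂), (y₁, y₂))`. -/
def gluePlan (π : Measure (X₁ × Y₁)) (P : Kernel (X₁ × Y₁) (X₂ × Y₂)) :
    Measure ((X₁ × X₂) × (Y₁ × Y₂)) :=
  (π ⊗ₘ P).map fun z => ((z.1.1, z.2.1), (z.1.2, z.2.2))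

variable {π : Measure (X₁ × Y₁)} {P : Kernel (X₁ × Y₁) (X₂ × Y₂)}

lemma isCoupling_gluePlan [SFinite π] [IsSFiniteKernel P] {μ : Measure X₁} {ν : Measure Y₁}
    {κ : Kernel X₁ X₂} [IsSFiniteKernel κ] {η : Kernel Y₁ Y₂} [IsSFiniteKernel η]
    (hπ : IsCoupling π μ ν) (hP : ∀ z, IsCoupling (P z) (κ z.1) (η z.2)) :
    IsCoupling (gluePlan π P) (μ ⊗ₘ κ) (ν ⊗ₘ η) where
  fst_eq := by
    rw [Measure.fst, gluePlan, Measure.map_map (by fun_prop) (by fun_prop), ← hπ.fst_eq]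
    exact map_prodMap_compProd π measurable_fst measurable_fst fun z => (hP z).fst_eq
  snd_eq := by
    rw [Measure.snd, gluePlan, Measure.map_map (by fun_prop) (by fun_prop), ← hπ.snd_eq]
    exact map_prodMap_compProd π measurable_snd measurable_snd fun z => (hP z).snd_eq

lemma lintegral_add_gluePlan [SFinite π] [IsMarkovKernel P] {f₁ : X₁ × Y₁ → ℝ≥0∞}
    {f₂ : X₂ × Y₂ → ℝ≥0∞} (hf₁ : Measurable f₁) (hf₂ : Measurable f₂) :
    ∫⁻ q, f₁ (q.1.1, q.2.1) + f₂ (q.1.2, q.2.2) ∂(gluePlan π P) =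
      ∫⁻ z, f₁ z ∂π + ∫⁻ z, ∫⁻ w, f₂ w ∂(P z) ∂π := by
  rw [gluePlan, lintegral_map (by fun_prop) (by fun_prop), Measure.lintegral_compProd (by fun_prop)]
  simp only [lintegral_add_left measurable_const, lintegral_const, measure_univ, mul_one]
  exact lintegral_add_left hf₁ _

end Glue

lemma optTransportCost_compProd_le {X₁ X₂ I : Type*} [MeasurableSpace X₁] [MeasurableSpace X₂]
    [MeasurableSpace I] [Countable I] [MeasurableSingletonClass I] {c₁ : X₁ → X₁ → ℝ}
    {c₂ : X₂ → X₂ → ℝ} (hc₁ : Measurable fun p : X₁ × X₁ => c₁ p.1 p.2)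
    (hc₂ : Measurable fun p : X₂ × X₂ => c₂ p.1 p.2)
    (hc₁0 : ∀ x y, 0 ≤ c₁ x y) (hc₂0 : ∀ x y, 0 ≤ c₂ x y)
    (μ₁ : Measure X₁) [IsProbabilityMeasure μ₁] (μ₂ : Measure X₂) [IsProbabilityMeasure μ₂]
    (σ : Measure X₁) [IsProbabilityMeasure σ] {a : X₁ → I} (ha : Measurable a)
    (η : Kernel I X₂) [IsMarkovKernel η] :
    optTransportCost (fun p q : X₁ × X₂ => c₁ p.1 q.1 + c₂ p.2 q.2) (μ₁.prod μ₂)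
        (σ ⊗ₘ η.comap a ha) ≤
      optTransportCost c₁ μ₁ σ + ∫⁻ i, optTransportCost c₂ μ₂ (η i) ∂(σ.map a) := by
  refine ENNReal.le_of_forall_pos_le_add fun ε hε _ => ?_
  have half_ne : (ε : ℝ≥0∞) / 2 ≠ 0 := by simp [hε.ne']
  obtain ⟨π, hπ, hπ_cost⟩ := exists_isCoupling_lintegral_le c₁ μ₁ σ half_ne
  choose p hp hp_cost using fun i => exists_isCoupling_lintegral_le c₂ μ₂ (η i) half_ne
  have := hπ.isProbabilityMeasure
  have hp_prob (i : I) := (hp i).isProbabilityMeasure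
  have : IsProbabilityMeasure (σ.map a) := Measure.isProbabilityMeasure_map ha.aemeasurable
  let P : Kernel I (X₂ × X₂) := Kernel.ofFunOfCountable p
  have : IsMarkovKernel P := ⟨hp_prob⟩
  let Q : Kernel (X₁ × X₁) (X₂ × X₂) := P.comap (fun z => a z.2) (ha.comp measurable_snd)
  have : IsMarkovKernel Q := Kernel.IsMarkovKernel.comap _ _
  have glue : IsCoupling (gluePlan π Q) (μ₁.prod μ₂) (σ ⊗ₘ η.comap a ha) := by
    rw [← Measure.compProd_const]
    exact isCoupling_gluePlan hπ fun z => hp (a z.2)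
  have glue_cost : ∫⁻ z, ∫⁻ w, ENNReal.ofReal (c₂ w.1 w.2) ∂(Q z) ∂π =
      ∫⁻ i, ∫⁻ w, ENNReal.ofReal (c₂ w.1 w.2) ∂(p i) ∂(σ.map a) := by
    rw [← hπ.snd_eq, Measure.snd, Measure.map_map ha measurable_snd,
      lintegral_map (measurable_of_countable _) (ha.comp measurable_snd)]
    rfl
  calc _ ≤ ∫⁻ q, ENNReal.ofReal (c₁ q.1.1 q.2.1 + c₂ q.1.2 q.2.2) ∂(gluePlan π Q) :=
        optTransportCost_le_lintegral _ glue
    _ = ∫⁻ z, ENNReal.ofReal (c₁ z.1 z.2) ∂π +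
          ∫⁻ i, ∫⁻ w, ENNReal.ofReal (c₂ w.1 w.2) ∂(p i) ∂(σ.map a) := by
        simp only [ENNReal.ofReal_add (hc₁0 _ _) (hc₂0 _ _)]
        rw [lintegral_add_gluePlan hc₁.ennreal_ofReal hc₂.ennreal_ofReal, glue_cost]
    _ ≤ (optTransportCost c₁ μ₁ σ + ε / 2) +
          ∫⁻ i, (optTransportCost c₂ μ₂ (η i) + ε / 2) ∂(σ.map a) := by
        gcongr with i
        exact hp_cost i
    _ = optTransportCost c₁ μ₁ σ + ∫⁻ i, optTransportCost c₂ μ₂ (η i) ∂(σ.map a) + ε := by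
        rw [lintegral_add_right _ measurable_const, lintegral_const, measure_univ, mul_one,
          add_add_add_comm, ENNReal.add_halves]

lemma lintegral_ofReal_eq_lintegral_meas_lt {Ω : Type*} [MeasurableSpace Ω] {f : Ω → ℝ}
    (hf : Measurable f) (π : Measure Ω) :
    ∫⁻ x, ENNReal.ofReal (f x) ∂π = ∫⁻ t in Ioi (0 : ℝ), π {x | t < f x} := by
  have h := lintegral_eq_lintegral_meas_lt π (f := fun x => max (f x) 0)
    (ae_of_all _ fun x => le_max_right _ _) (hf.max measurable_const).aemeasurable
  simp only [ENNReal.ofReal_max, ENNReal.ofReal_zero, max_zero] at h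
  rw [h]
  refine setLIntegral_congr_fun measurableSet_Ioi fun t ht => ?_
  simp only [lt_max_iff, (mem_Ioi.mp ht).not_gt, or_false]

section WeakTopology

variable {Ω : Type*} [TopologicalSpace Ω] [MeasurableSpace Ω] [BorelSpace Ω]

lemma lowerSemicontinuous_lintegral_ofReal [TopologicalSpace.PseudoMetrizableSpace Ω]
    [TopologicalSpace.SeparableSpace Ω] {f : Ω → ℝ} (hf : LowerSemicontinuous f) :
    LowerSemicontinuous fun π : ProbabilityMeasure Ω => ∫⁻ x, ENNReal.ofReal (f x) ∂π := by
  refine lowerSemicontinuous_iff_isClosed_preimage.mpr fun r => IsSeqClosed.isClosed ?_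
  intro π π₀ hπ hlim
  have open_le (t : ℝ) : (π₀ : Measure Ω) {x | t < f x} ≤
      liminf (fun n => (π n : Measure Ω) {x | t < f x}) atTop :=
    ProbabilityMeasure.le_liminf_measure_open_of_tendsto hlim (hf.isOpen_preimage t)
  have hmeas (n : ℕ) : Measurable fun t => (π n : Measure Ω) {x | t < f x} :=
    Antitone.measurable fun s t hst => measure_mono fun x hx => hst.trans_lt hx
  rw [mem_preimage, mem_Iic]
  calc ∫⁻ x, ENNReal.ofReal (f x) ∂π₀
      ≤ ∫⁻ t in Ioi (0 : ℝ), liminf (fun n => (π n : Measure Ω) {x | t < f x}) atTop := by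
        rw [lintegral_ofReal_eq_lintegral_meas_lt hf.measurable]
        exact lintegral_mono open_le
    _ ≤ liminf (fun n => ∫⁻ t in Ioi (0 : ℝ), (π n : Measure Ω) {x | t < f x}) atTop :=
        lintegral_liminf_le hmeas
    _ ≤ r := by
        simp only [← lintegral_ofReal_eq_lintegral_meas_lt hf.measurable]
        exact liminf_le_of_le (by isBoundedDefault) fun b hb =>
          let ⟨n, hn⟩ := hb.exists; hn.trans (hπ n)

lemma isTightMeasureSet_of_isCompact [PolishSpace Ω] {K : Set (ProbabilityMeasure Ω)}
    (hK : IsCompact K) : IsTightMeasureSet {(π : Measure Ω) | π ∈ K} := by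
  let := TopologicalSpace.upgradeIsCompletelyMetrizable Ω
  exact isTightMeasureSet_of_isCompact_closure (by rwa [hK.isClosed.closure_eq])

end WeakTopology

section Marginals

variable {X Y : Type*} [MeasurableSpace X] [MeasurableSpace Y]

/-- The two marginals of a probability measure on a product, as a map between spaces of probability
measures. -/
def marginals (π : ProbabilityMeasure (X × Y)) : ProbabilityMeasure X × ProbabilityMeasure Y :=
  (π.map measurable_fst.aemeasurable, π.map measurable_snd.aemeasurable)

lemma isCoupling_marginals (π : ProbabilityMeasure (X × Y)) :
    IsCoupling (π : Measure (X × Y)) (marginals π).1 (marginals π).2 :=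
  ⟨rfl, rfl⟩

lemma IsCoupling.exists_marginals_eq {π : Measure (X × Y)} {μ : ProbabilityMeasure X}
    {ν : ProbabilityMeasure Y} (h : IsCoupling π μ ν) :
    ∃ π' : ProbabilityMeasure (X × Y), (π' : Measure (X × Y)) = π ∧ marginals π' = (μ, ν) :=
  ⟨⟨π, h.isProbabilityMeasure⟩, rfl, Prod.ext (Subtype.ext h.fst_eq) (Subtype.ext h.snd_eq)⟩

variable [TopologicalSpace X] [PolishSpace X] [BorelSpace X]
  [TopologicalSpace Y] [PolishSpace Y] [BorelSpace Y]

lemma isProperMap_marginals : IsProperMap (marginals (X := X) (Y := Y)) := by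
  have continuous_marginals : Continuous (marginals (X := X) (Y := Y)) :=
    (ProbabilityMeasure.continuous_map continuous_fst).prodMk
      (ProbabilityMeasure.continuous_map continuous_snd)
  refine isProperMap_iff_isCompact_preimage.mpr ⟨continuous_marginals, fun K hK => ?_⟩
  have tight : IsTightMeasureSet {(π : Measure (X × Y)) | π ∈ marginals ⁻¹' K} := by
    refine .prodMk ((isTightMeasureSet_of_isCompact (hK.image continuous_fst)).subset ?_)
      ((isTightMeasureSet_of_isCompact (hK.image continuous_snd)).subset ?_)
    · rintro _ ⟨_, ⟨π, hπ, rfl⟩, rfl⟩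
      exact ⟨_, mem_image_of_mem Prod.fst hπ, rfl⟩
    · rintro _ ⟨_, ⟨π, hπ, rfl⟩, rfl⟩
      exact ⟨_, mem_image_of_mem Prod.snd hπ, rfl⟩
  let := TopologicalSpace.upgradeIsCompletelyMetrizable X
  let := TopologicalSpace.upgradeIsCompletelyMetrizable Y
  rw [← (hK.isClosed.preimage continuous_marginals).closure_eq]
  exact isCompact_closure_of_isTightMeasureSet tight

lemma lowerSemicontinuous_optTransportCost {c : X → X → ℝ}
    (hc : LowerSemicontinuous fun p : X × X => c p.1 p.2) :
    LowerSemicontinuous fun p : ProbabilityMeasure X × ProbabilityMeasure X =>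
      optTransportCost c p.1 p.2 := by
  refine lowerSemicontinuous_iff_isClosed_preimage.mpr fun r => ?_
  have sublevel_eq : (fun p : ProbabilityMeasure X × ProbabilityMeasure X =>
      optTransportCost c p.1 p.2) ⁻¹' Iic r = ⋂ s ∈ Ioi r,
        marginals '' {π | ∫⁻ p, ENNReal.ofReal (c p.1 p.2) ∂(π : Measure (X × X)) ≤ s} := by
    ext ⟨μ, ν⟩
    simp only [mem_preimage, mem_Iic, mem_iInter, mem_Ioi, mem_image, mem_ofPred_eq]
    refine ⟨fun h s hs => ?_, fun h => le_of_forall_gt_imp_ge_of_dense fun s hs => ?_⟩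
    · obtain ⟨π, hπ, hlt⟩ := exists_isCoupling_lintegral_lt (h.trans_lt hs)
      obtain ⟨π', rfl, h_marginals⟩ := hπ.exists_marginals_eq
      exact ⟨π', hlt.le, h_marginals⟩
    · obtain ⟨π, hle, h_marginals⟩ := h s hs
      have hπ : IsCoupling (π : Measure (X × X)) μ ν := by
        simpa only [h_marginals] using isCoupling_marginals π
      exact (optTransportCost_le_lintegral c hπ).trans hle
  rw [sublevel_eq]
  exact isClosed_biInter fun s _ => isProperMap_marginals.isClosedMap _
    ((lowerSemicontinuous_lintegral_ofReal hc).isClosed_preimage s)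

end Marginals

section Coarsening

lemma dist_integral_comp_le {Z : Type*} [PseudoMetricSpace Z] [MeasurableSpace Z]
    [OpensMeasurableSpace Z] (π : Measure Z) [IsProbabilityMeasure π]
    (f : BoundedContinuousFunction Z ℝ) {L : ℝ≥0} (hf : LipschitzWith L f) {r : Z → Z}
    (hr : Measurable r) {ε : ℝ} (hε : ∀ z, dist (r z) z ≤ ε) :
    dist (∫ z, f (r z) ∂π) (∫ z, f z ∂π) ≤ L * ε := by
  have := Measure.isProbabilityMeasure_map (μ := π) hr.aemeasurable
  have hfr : Integrable (fun z => f (r z)) π := (f.integrable (π.map r)).comp_measurable hr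
  rw [dist_eq_norm, ← integral_sub hfr (f.integrable π)]
  have hbound (z : Z) : ‖f (r z) - f z‖ ≤ L * ε := by
    rw [← dist_eq_norm]
    exact (hf.dist_le_mul _ _).trans (by gcongr; exact hε z)
  simpa using norm_integral_le_of_norm_le_const (ae_of_all π hbound)

lemma tendsto_of_map_eq_of_dist_le {Z ι : Type*} [PseudoMetricSpace Z] [MeasurableSpace Z]
    [OpensMeasurableSpace Z] {l : Filter ι} [l.IsCountablyGenerated]
    {νs : ι → ProbabilityMeasure Z} {ν : ProbabilityMeasure Z} {r : ι → Z → Z}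
    (hr : ∀ i, Measurable (r i)) {ε : ι → ℝ} (hε : Tendsto ε l (𝓝 0))
    (hdist : ∀ i z, dist (r i z) z ≤ ε i)
    (hmap : ∀ i, (νs i : Measure Z).map (r i) = (ν : Measure Z).map (r i)) :
    Tendsto νs l (𝓝 ν) := by
  rw [tendsto_iff_forall_lipschitz_integral_tendsto]
  rintro f ⟨C, hC⟩ ⟨L, hL⟩
  let g : BoundedContinuousFunction Z ℝ := .mkOfBound ⟨f, hL.continuous⟩ C hC
  have hclose (i : ι) (π : ProbabilityMeasure Z) :
      dist (∫ z, f z ∂((π : Measure Z).map (r i))) (∫ z, f z ∂π) ≤ L * ε i := by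
    rw [integral_map (hr i).aemeasurable hL.continuous.aestronglyMeasurable]
    exact dist_integral_comp_le (π : Measure Z) g hL (hr i) (hdist i)
  rw [tendsto_iff_dist_tendsto_zero]
  refine squeeze_zero (g := fun i => L * ε i + L * ε i) (fun _ => dist_nonneg) (fun i => ?_) ?_
  · calc _ ≤ _ := dist_triangle_left _ _ (∫ z, f z ∂((νs i : Measure Z).map (r i)))
      _ ≤ L * ε i + L * ε i := add_le_add (hclose i _) (hmap i ▸ hclose i ν)
  · simpa using (hε.const_mul (L : ℝ)).add (hε.const_mul (L : ℝ))

lemma exists_measurable_nat_dist_lt (X : Type*) [PseudoMetricSpace X]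
    [TopologicalSpace.SeparableSpace X] [Nonempty X] [MeasurableSpace X] [OpensMeasurableSpace X]
    {ε : ℝ} (hε : 0 < ε) :
    ∃ (a : X → ℕ) (d : ℕ → X), Measurable a ∧ ∀ x, dist (d (a x)) x < ε := by
  classical
  have hdense (x : X) : ∃ n, dist (TopologicalSpace.denseSeq X n) x < ε := by
    simpa only [dist_comm] using (TopologicalSpace.denseRange_denseSeq X).exists_dist_lt x hε
  refine ⟨fun x => Nat.find (hdense x), TopologicalSpace.denseSeq X,
    measurable_find hdense fun n => ?_, fun x => Nat.find_spec (hdense x)⟩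
  exact (isOpen_lt (by fun_prop) continuous_const).measurableSet

variable {X Y I : Type*} [MeasurableSpace X] [MeasurableSpace Y] [StandardBorelSpace Y]
  [Nonempty Y] [MeasurableSpace I]

/-- For `(x, y)` distributed according to `ν`, the conditional law of `y` given the value `a x`,
thought of as the label of the cell containing `x`. -/
def cellCond (a : X → I) (ν : Measure (X × Y)) [IsFiniteMeasure ν] : Kernel I Y :=
  condDistrib Prod.snd (fun p => a p.1) ν

/-- The measure with the same first marginal as `ν` in which the conditional law of `y` given `x` is
replaced by the conditional law of `y` given `a x`. -/
def coarsen {a : X → I} (ha : Measurable a) (ν : Measure (X × Y)) [IsFiniteMeasure ν] :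
    Measure (X × Y) :=
  ν.fst ⊗ₘ (cellCond a ν).comap a ha

variable {a : X → I} (ν : Measure (X × Y))

instance [IsFiniteMeasure ν] : IsMarkovKernel (cellCond a ν) :=
  inferInstanceAs (IsMarkovKernel (condDistrib _ _ ν))

instance (ha : Measurable a) [IsProbabilityMeasure ν] : IsProbabilityMeasure (coarsen ha ν) :=
  inferInstanceAs (IsProbabilityMeasure (ν.fst ⊗ₘ (cellCond a ν).comap a ha))

lemma map_fst_compProd_cellCond (ha : Measurable a) [IsFiniteMeasure ν] :
    ν.fst.map a ⊗ₘ cellCond a ν = ν.map (Prod.map a id) := by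
  rw [Measure.fst, Measure.map_map ha measurable_fst]
  exact compProd_map_condDistrib measurable_snd.aemeasurable

lemma map_prodMap_coarsen (ha : Measurable a) [IsFiniteMeasure ν] :
    (coarsen ha ν).map (Prod.map a id) = ν.map (Prod.map a id) := by
  rw [coarsen, map_prodMap_compProd ν.fst ha measurable_id (κ := cellCond a ν)
    fun _ => Measure.map_id, map_fst_compProd_cellCond ν ha]

lemma lintegral_klDiv_cellCond_le (ha : Measurable a) [IsFiniteMeasure ν] (μ : Measure Y)
    [IsFiniteMeasure μ] :
    ∫⁻ i, klDiv (cellCond a ν i) μ ∂(ν.fst.map a) ≤ klDiv ν (ν.fst.prod μ) := by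
  calc ∫⁻ i, klDiv (cellCond a ν i) μ ∂(ν.fst.map a)
      ≤ klDiv (ν.fst.map a ⊗ₘ cellCond a ν) (ν.fst.map a ⊗ₘ Kernel.const I μ) :=
        lintegral_klDiv_le _ _ (Kernel.const I μ)
    _ = klDiv (ν.map (Prod.map a id)) ((ν.fst.prod μ).map (Prod.map a id)) := by
        rw [map_fst_compProd_cellCond ν ha, Measure.compProd_const,
          ← Measure.map_prod_map _ _ ha measurable_id, Measure.map_id]
    _ ≤ klDiv ν (ν.fst.prod μ) := klDiv_map_le _ _ (ha.prodMap measurable_id)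

lemma map_lintegral_optTransportCost_cellCond_le {α : ℝ≥0∞ → ℝ≥0∞} (hα : ClassCFun α)
    {c : Y → Y → ℝ} (μ : Measure Y) [IsFiniteMeasure μ]
    (hTCI : ∀ ν₂ : Measure Y, IsProbabilityMeasure ν₂ →
      α (optTransportCost c μ ν₂) ≤ klDiv ν₂ μ)
    (ha : Measurable a) [IsProbabilityMeasure ν] :
    α (∫⁻ i, optTransportCost c μ (cellCond a ν i) ∂(ν.fst.map a)) ≤ klDiv ν (ν.fst.prod μ) := by
  have := Measure.isProbabilityMeasure_map (μ := ν.fst) ha.aemeasurable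
  calc _ ≤ ∫⁻ i, α (optTransportCost c μ (cellCond a ν i)) ∂(ν.fst.map a) :=
        hα.map_lintegral_le _ _
    _ ≤ ∫⁻ i, klDiv (cellCond a ν i) μ ∂(ν.fst.map a) :=
        lintegral_mono fun i => hTCI _ inferInstance
    _ ≤ klDiv ν (ν.fst.prod μ) := lintegral_klDiv_cellCond_le ν ha μ

lemma mem_closure_coarsen {X Y : Type*} [TopologicalSpace X] [PolishSpace X] [MeasurableSpace X]
    [BorelSpace X] [TopologicalSpace Y] [PolishSpace Y] [MeasurableSpace Y] [BorelSpace Y]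
    [Nonempty Y] (ν : ProbabilityMeasure (X × Y)) :
    ν ∈ closure {ν' : ProbabilityMeasure (X × Y) | ∃ (a : X → ℕ) (ha : Measurable a),
      (ν' : Measure (X × Y)) = coarsen ha ν} := by
  let := TopologicalSpace.upgradeIsCompletelyMetrizable X
  let := TopologicalSpace.upgradeIsCompletelyMetrizable Y
  have : Nonempty X := ν.nonempty.map Prod.fst
  choose a d ha had using fun n : ℕ =>
    exists_measurable_nat_dist_lt X (Nat.one_div_pos_of_nat (α := ℝ) (n := n))
  let r (n : ℕ) : X × Y → X × Y := Prod.map (d n ∘ a n) id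
  have map_r (n : ℕ) (π : Measure (X × Y)) :
      π.map (r n) = (π.map (Prod.map (a n) id)).map (Prod.map (d n) id) := by
    rw [Measure.map_map (by fun_prop) (by fun_prop)]
    rfl
  let νs (n : ℕ) : ProbabilityMeasure (X × Y) := ⟨coarsen (ha n) ν, inferInstance⟩
  refine mem_closure_of_tendsto (f := νs) (b := atTop)
    (tendsto_of_map_eq_of_dist_le (r := r) (fun n => by fun_prop)
      tendsto_one_div_add_atTop_nhds_zero_nat (fun n z => ?_) fun n => ?_)
    (Eventually.of_forall fun n => ⟨a n, ha n, rfl⟩)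
  · simpa [r, Prod.dist_eq] using (had n z.1).le
  · rw [map_r, map_r]
    exact congrArg _ (map_prodMap_coarsen (ν : Measure (X × Y)) (ha n))

end Coarsening

lemma lowerSemicontinuous_add_cost {X₁ X₂ : Type*} [TopologicalSpace X₁] [TopologicalSpace X₂]
    {c₁ : X₁ → X₁ → ℝ} {c₂ : X₂ → X₂ → ℝ}
    (hc₁ : LowerSemicontinuous fun p : X₁ × X₁ => c₁ p.1 p.2)
    (hc₂ : LowerSemicontinuous fun p : X₂ × X₂ => c₂ p.1 p.2) :
    LowerSemicontinuous fun p : (X₁ × X₂) × (X₁ × X₂) => c₁ p.1.1 p.2.1 + c₂ p.1.2 p.2.2 :=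
  (hc₁.comp (g := fun p : (X₁ × X₂) × (X₁ × X₂) => (p.1.1, p.2.1)) (by fun_prop)).add
    (hc₂.comp (g := fun p : (X₁ × X₂) × (X₁ × X₂) => (p.1.2, p.2.2)) (by fun_prop))

section Tensorization

variable {X₁ X₂ : Type*}
  [TopologicalSpace X₁] [PolishSpace X₁] [MeasurableSpace X₁] [BorelSpace X₁]
  [TopologicalSpace X₂] [PolishSpace X₂] [MeasurableSpace X₂] [BorelSpace X₂]

lemma optTransportCost_prod_le {c₁ : X₁ → X₁ → ℝ} {c₂ : X₂ → X₂ → ℝ}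
    (hc₁ : LowerSemicontinuous fun p : X₁ × X₁ => c₁ p.1 p.2)
    (hc₂ : LowerSemicontinuous fun p : X₂ × X₂ => c₂ p.1 p.2)
    (hc₁0 : ∀ x y, 0 ≤ c₁ x y) (hc₂0 : ∀ x y, 0 ≤ c₂ x y)
    (μ₁ : Measure X₁) [IsProbabilityMeasure μ₁] (μ₂ : Measure X₂) [IsProbabilityMeasure μ₂]
    {α : ℝ≥0∞ → ℝ≥0∞} (hα : ClassCFun α)
    (hTCI : ∀ ν₂ : Measure X₂, IsProbabilityMeasure ν₂ →
      α (optTransportCost c₂ μ₂ ν₂) ≤ klDiv ν₂ μ₂)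
    (ν : Measure (X₁ × X₂)) [IsProbabilityMeasure ν] :
    optTransportCost (fun p q => c₁ p.1 q.1 + c₂ p.2 q.2) (μ₁.prod μ₂) ν ≤
      optTransportCost c₁ μ₁ ν.fst + sSup {t | α t ≤ klDiv ν (ν.fst.prod μ₂)} := by
  have : Nonempty X₂ := μ₂.nonempty_of_neZero
  let μ : ProbabilityMeasure (X₁ × X₂) := ⟨μ₁.prod μ₂, inferInstance⟩
  have hlsc : LowerSemicontinuous fun π : ProbabilityMeasure (X₁ × X₂) =>
      optTransportCost (fun p q : X₁ × X₂ => c₁ p.1 q.1 + c₂ p.2 q.2) (μ₁.prod μ₂) π :=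
    (lowerSemicontinuous_optTransportCost
      (c := fun p q : X₁ × X₂ => c₁ p.1 q.1 + c₂ p.2 q.2)
      (lowerSemicontinuous_add_cost hc₁ hc₂)).comp (Continuous.prodMk_right μ)
  refine closure_minimal ?_ (hlsc.isClosed_preimage _)
    (mem_closure_coarsen (⟨ν, inferInstance⟩ : ProbabilityMeasure (X₁ × X₂)))
  rintro π ⟨a, ha, hπ⟩
  rw [mem_preimage, mem_Iic, hπ]
  have hjensen : ∫⁻ i, optTransportCost c₂ μ₂ (cellCond a ν i) ∂ν.fst.map a ≤
      sSup {t | α t ≤ klDiv ν (ν.fst.prod μ₂)} :=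
    le_sSup (map_lintegral_optTransportCost_cellCond_le ν hα μ₂ hTCI ha)
  calc _ ≤ optTransportCost c₁ μ₁ ν.fst +
        ∫⁻ i, optTransportCost c₂ μ₂ (cellCond a ν i) ∂ν.fst.map a :=
      optTransportCost_compProd_le hc₁.measurable hc₂.measurable hc₁0 hc₂0 μ₁ μ₂ ν.fst ha _
    _ ≤ _ := by gcongr

theorem tensorization_TCI_general
    (μ₁ : Measure X₁) [IsProbabilityMeasure μ₁]
    (μ₂ : Measure X₂) [IsProbabilityMeasure μ₂]
    (c₁ : X₁ → X₁ → ℝ) (c₂ : X₂ → X₂ → ℝ)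
    (hc₁ : LowerSemicontinuous fun p : X₁ × X₁ => c₁ p.1 p.2)
    (hc₂ : LowerSemicontinuous fun p : X₂ × X₂ => c₂ p.1 p.2)
    (hc₁0 : ∀ x y, 0 ≤ c₁ x y) (hc₂0 : ∀ x y, 0 ≤ c₂ x y)
    (α₁ α₂ : ℝ≥0∞ → ℝ≥0∞) (hα₁ : Monotone α₁) (hα₂ : ClassCFun α₂)
    (hTCI₁ : ∀ ν₁ : Measure X₁, IsProbabilityMeasure ν₁ →
      α₁ (optTransportCost c₁ μ₁ ν₁) ≤ relEntropy ν₁ μ₁)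
    (hTCI₂ : ∀ ν₂ : Measure X₂, IsProbabilityMeasure ν₂ →
      α₂ (optTransportCost c₂ μ₂ ν₂) ≤ relEntropy ν₂ μ₂)
    (ν : Measure (X₁ × X₂)) [IsProbabilityMeasure ν] :
    infConvol α₁ α₂
        (optTransportCost (fun p q => c₁ p.1 q.1 + c₂ p.2 q.2) (μ₁.prod μ₂) ν) ≤
      relEntropy ν (μ₁.prod μ₂) := by
  have : Nonempty X₂ := μ₂.nonempty_of_neZero
  have hTCI₂_klDiv (ν₂ : Measure X₂) (hν₂ : IsProbabilityMeasure ν₂) :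
      α₂ (optTransportCost c₂ μ₂ ν₂) ≤ klDiv ν₂ μ₂ :=
    relEntropy_eq_klDiv_s8 ν₂ μ₂ ▸ hTCI₂ ν₂ hν₂
  calc _ ≤ α₁ (optTransportCost c₁ μ₁ ν.fst) +
          α₂ (sSup {t | α₂ t ≤ klDiv ν (ν.fst.prod μ₂)}) :=
        infConvol_le_of_le_add hα₁ hα₂.1
          (optTransportCost_prod_le hc₁ hc₂ hc₁0 hc₂0 μ₁ μ₂ hα₂ hTCI₂_klDiv ν)
    _ ≤ relEntropy ν.fst μ₁ + klDiv ν (ν.fst.prod μ₂) :=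
        add_le_add (hTCI₁ _ inferInstance) (hα₂.map_sSup_le _)
    _ = relEntropy ν (μ₁.prod μ₂) := by
        rw [relEntropy_eq_klDiv_s8, relEntropy_eq_klDiv_s8, ← klDiv_prod_eq_add]

end Tensorization

/-- Tensorization of convex transportation cost inequalities. -/
theorem tensorization_TCI
    {X₁ X₂ : Type*}
    [TopologicalSpace X₁] [PolishSpace X₁] [MeasurableSpace X₁] [BorelSpace X₁]
    [TopologicalSpace X₂] [PolishSpace X₂] [MeasurableSpace X₂] [BorelSpace X₂]
    (μ₁ : Measure X₁) [IsProbabilityMeasure μ₁]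
    (μ₂ : Measure X₂) [IsProbabilityMeasure μ₂]
    (c₁ : X₁ → X₁ → ℝ) (c₂ : X₂ → X₂ → ℝ)
    (hc₁ : Continuous fun p : X₁ × X₁ => c₁ p.1 p.2)
    (hc₂ : Continuous fun p : X₂ × X₂ => c₂ p.1 p.2)
    (hc₁0 : ∀ x y, 0 ≤ c₁ x y) (hc₂0 : ∀ x y, 0 ≤ c₂ x y)
    (hc₁diag : ∀ x, c₁ x x = 0) (hc₂diag : ∀ x, c₂ x x = 0)
    (α₁ α₂ : ℝ≥0∞ → ℝ≥0∞) (hα₁ : ClassCFun α₁) (hα₂ : ClassCFun α₂)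
    (hTCI₁ : ∀ ν₁ : Measure X₁, IsProbabilityMeasure ν₁ →
      α₁ (optTransportCost c₁ μ₁ ν₁) ≤ relEntropy ν₁ μ₁)
    (hTCI₂ : ∀ ν₂ : Measure X₂, IsProbabilityMeasure ν₂ →
      α₂ (optTransportCost c₂ μ₂ ν₂) ≤ relEntropy ν₂ μ₂) :
    ∀ ν : Measure (X₁ × X₂), IsProbabilityMeasure ν →
      infConvol α₁ α₂
          (optTransportCost (fun p q => c₁ p.1 q.1 + c₂ p.2 q.2) (μ₁.prod μ₂) ν) ≤
        relEntropy ν (μ₁.prod μ₂) := by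
  exact fun ν _ => tensorization_TCI_general μ₁ μ₂ c₁ c₂ hc₁.lowerSemicontinuous
    hc₂.lowerSemicontinuous hc₁0 hc₂0 α₁ α₂ hα₁.1 hα₂ hTCI₁ hTCI₂ ν

end
end
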